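/- arXiv:2001.00303 — 4 statements merged into one kernel-verified Lean document; each statement's English description precedes it below -/
import Mathlib

section
/- Suppose that for every feasible pinning (A,B) with |A|+|B| ≤ n−2 and every i ∉ A ∪ B one has 0 < Pr_{μ_{A,B}}[i ∈ S] < 1, and suppose μ is (η_0,…,η_{n−2})-spectrally independent. Then for every feasible pinning (A,B) with |A|+|B| = k ≤ n−2, the walk matrix P_{A,B} — indexed by pairs (i,s) with i ∉ A∪B and s ∈ {in,out}, with entries P_{A,B}((i,s),(j,t)) = (1/(n−k−1))·Pr_{μ_{A,B}}[j has state t | i has state s] for i ≠ j and P_{A,B}((i,s),(i,t)) = 0 — satisfies: every real eigenvalue t of P_{A,B} with t ≠ 1 obeys t ≤ η_k/(n−k−1). -/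
open scoped Classical
open Finset

noncomputable section

namespace PaperStmt

variable {n : ℕ}

/-- Probability of an event under `μ`. -/
def prE (μ : Finset (Fin n) → ℝ) (E : Finset (Fin n) → Prop) : ℝ :=
  ∑ S : Finset (Fin n), if E S then μ S else 0

/-- Conditional probability `Pr[E | F]` under `μ`. -/
def condPrE (μ : Finset (Fin n) → ℝ) (E F : Finset (Fin n) → Prop) : ℝ :=
  prE μ (fun S => E S ∧ F S) / prE μ F

/-- The distribution `μ` conditioned on the pinning `(A, B)`. -/
def pin (μ : Finset (Fin n) → ℝ) (A B : Finset (Fin n)) : Finset (Fin n) → ℝ :=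
  fun S => if A ⊆ S ∧ Disjoint B S then
    μ S / prE μ (fun S' => A ⊆ S' ∧ Disjoint B S') else 0

/-- Feasibility of the pinning `(A, B)`. -/
def Feasible (μ : Finset (Fin n) → ℝ) (A B : Finset (Fin n)) : Prop :=
  0 < prE μ (fun S => A ⊆ S ∧ Disjoint B S)

/-- The pinned pairwise influence matrix `Ψ_{A,B}`. -/
def pinnedPsi (μ : Finset (Fin n) → ℝ) (A B : Finset (Fin n)) :
    Matrix (Fin n) (Fin n) ℝ :=
  fun i j =>
    if i ≠ j ∧ i ∉ A ∪ B ∧ j ∉ A ∪ B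
        ∧ 0 < prE (pin μ A B) (fun S => i ∈ S)
        ∧ 0 < prE (pin μ A B) (fun S => i ∉ S) then
      condPrE (pin μ A B) (fun S => j ∈ S) (fun S => i ∈ S)
        - condPrE (pin μ A B) (fun S => j ∈ S) (fun S => i ∉ S)
    else 0

/-- `t` is a real eigenvalue of the real matrix `M`. -/
def IsRealEigenvalue {ι : Type*} [Fintype ι] (M : Matrix ι ι ℝ) (t : ℝ) : Prop :=
  ∃ v : ι → ℝ, v ≠ 0 ∧ M.mulVec v = t • v

/-- `μ` is `(η 0, …, η (n-2))`-spectrally independent. -/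
def SpectrallyIndependent (μ : Finset (Fin n) → ℝ) (η : ℕ → ℝ) : Prop :=
  ∀ A B : Finset (Fin n), Disjoint A B → Feasible μ A B →
    A.card + B.card ≤ n - 2 →
    ∀ t : ℝ, IsRealEigenvalue (pinnedPsi μ A B) t → t ≤ η (A.card + B.card)

/-- The event "`i` has state `s`" (`true` = in, `false` = out). -/
def stateEvent (i : Fin n) (s : Bool) : Finset (Fin n) → Prop :=
  fun S => if s then i ∈ S else i ∉ S

/-- The walk matrix `P_{A,B}`, indexed by pairs `(i, s)` with `i ∉ A ∪ B`
and `s ∈ {in, out}`. -/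
def pinnedWalk (μ : Finset (Fin n) → ℝ) (A B : Finset (Fin n)) :
    Matrix ({i : Fin n // i ∉ A ∪ B} × Bool) ({i : Fin n // i ∉ A ∪ B} × Bool) ℝ :=
  fun p q =>
    if p.1 = q.1 then 0
    else (1 / ((n : ℝ) - (A.card + B.card) - 1)) *
      condPrE (pin μ A B) (stateEvent q.1.1 q.2) (stateEvent p.1.1 p.2)

/-!
Let the walk matrix `P` of a pinning of `k` elements act on functions of an element and its state.
Each row of `P` gives total mass `1/(n-k-1)` to the two states of every other element, so `P`
preserves the functions that do not depend on the state, and acts on them as `1/(n-k-1)` times the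
adjacency matrix of a complete graph, whose only eigenvalues are `-1` and `n-k-1`. On the quotient
by these functions, identified through `v ↦ v (i, in) - v (i, out)`, it acts as `Ψ/(n-k-1)`. Hence
an eigenvalue of `P` is `1`, `-1/(n-k-1)`, or `1/(n-k-1)` times an eigenvalue of `Ψ`.
-/

section Eigenvalues

variable {ι κ : Type*} [Fintype ι] [Fintype κ]

theorem IsRealEigenvalue.of_smul {M : Matrix ι ι ℝ} {c t : ℝ} (hc : c ≠ 0)
    (h : IsRealEigenvalue (c • M) t) : IsRealEigenvalue M (c⁻¹ * t) := by
  obtain ⟨v, hv, hMv⟩ := h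
  refine ⟨v, hv, ?_⟩
  rw [mul_smul, ← hMv, Matrix.smul_mulVec, inv_smul_smul₀ hc]

theorem IsRealEigenvalue.of_submatrix {M : Matrix ι ι ℝ} {e : κ → ι} {t : ℝ}
    (he : Function.Injective e) (hrow : ∀ i ∉ Set.range e, M i = 0)
    (h : IsRealEigenvalue (M.submatrix e e) t) : IsRealEigenvalue M t := by
  obtain ⟨v, hv, hMv⟩ := h
  have mulVec_extend (i : ι) :
      M.mulVec (Function.extend e v 0) i = ∑ k, M i (e k) * v k := by
    refine (Fintype.sum_of_injective e he _ _ (fun j hj => ?_) fun k => ?_).symm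
    · rw [Function.extend_apply' _ _ _ hj, Pi.zero_apply, mul_zero]
    · rw [he.extend_apply]
  refine ⟨Function.extend e v 0, fun h0 => hv ?_, funext fun i => ?_⟩
  · funext k
    rw [← he.extend_apply v 0 k, h0, Pi.zero_apply, Pi.zero_apply]
  · rw [mulVec_extend, Pi.smul_apply]
    by_cases hi : i ∈ Set.range e
    · obtain ⟨k, rfl⟩ := hi
      rw [he.extend_apply]
      exact congrFun hMv k
    · simp [hrow i hi, Function.extend_apply' _ _ _ hi]

theorem IsRealEigenvalue.eq_neg_one_or_of_adjMatrix_top [DecidableEq ι] {t : ℝ}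
    (h : IsRealEigenvalue ((⊤ : SimpleGraph ι).adjMatrix ℝ) t) :
    t = -1 ∨ t = Fintype.card ι - 1 := by
  obtain ⟨u, hu, hAu⟩ := h
  obtain ⟨i, hi⟩ := Function.ne_iff.mp hu
  have sum_eq (j : ι) : ∑ k, u k = (t + 1) * u j := by
    have hj : ∑ k ∈ {j}ᶜ, u k = t * u j := by
      rw [← SimpleGraph.neighborFinset_top, ← SimpleGraph.adjMatrix_mulVec_apply, hAu,
        Pi.smul_apply, smul_eq_mul]
    rw [Fintype.sum_eq_add_sum_compl j, hj]
    ring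
  have card_mul_sum : (Fintype.card ι : ℝ) * ∑ k, u k = (t + 1) * ∑ k, u k := by
    rw [← nsmul_eq_mul, ← card_univ, ← sum_const, mul_sum]
    exact sum_congr rfl fun j _ => sum_eq j
  by_cases hsum : ∑ k, u k = 0
  · left
    have : (t + 1) * u i = 0 := by rw [← sum_eq i, hsum]
    exact eq_neg_of_add_eq_zero_left ((mul_eq_zero.mp this).resolve_right hi)
  · right
    exact eq_sub_of_add_eq (mul_right_cancel₀ hsum card_mul_sum).symm

end Eigenvalues

section StateBlocks

variable {ι R : Type*} [Ring R]

/-- The effect on `v` of switching the state of an element from out (`false`) to in (`true`), used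
as coordinates on the quotient by the functions that do not depend on the state. -/
def stateDiff (v : ι × Bool → R) (i : ι) : R :=
  v (i, true) - v (i, false)

theorem stateDiff_eq_zero_iff {v : ι × Bool → R} :
    stateDiff v = 0 ↔ ∃ u : ι → R, v = u ∘ Prod.fst := by
  refine ⟨fun h => ⟨fun i => v (i, false), ?_⟩, ?_⟩
  · funext ⟨i, s⟩
    cases s
    · rfl
    · exact sub_eq_zero.mp (congrFun h i)
  · rintro ⟨u, rfl⟩
    exact funext fun i => sub_self (u i)

variable [Fintype ι] {P : Matrix (ι × Bool) (ι × Bool) R} {G Ψ : Matrix ι ι R}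

theorem mulVec_comp_fst (hG : ∀ i s j, P (i, s) (j, true) + P (i, s) (j, false) = G i j)
    (u : ι → R) : P.mulVec (u ∘ Prod.fst) = G.mulVec u ∘ Prod.fst := by
  funext ⟨i, s⟩
  simp only [Matrix.mulVec, dotProduct, Function.comp_apply, Fintype.sum_prod_type,
    Fintype.sum_bool, ← add_mul, hG]

theorem stateDiff_mulVec (hG : ∀ i s j, P (i, s) (j, true) + P (i, s) (j, false) = G i j)
    (hΨ : ∀ i j, P (i, true) (j, true) - P (i, false) (j, true) = Ψ i j) (v : ι × Bool → R) :
    stateDiff (P.mulVec v) = Ψ.mulVec (stateDiff v) := by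
  funext i
  simp only [stateDiff, Matrix.mulVec, dotProduct, Fintype.sum_prod_type, Fintype.sum_bool,
    ← sum_sub_distrib]
  refine sum_congr rfl fun j _ => ?_
  rw [← hΨ, eq_sub_of_add_eq' (hG i true j), eq_sub_of_add_eq' (hG i false j)]
  noncomm_ring

end StateBlocks

theorem IsRealEigenvalue.or_of_stateBlocks {ι : Type*} [Fintype ι]
    {P : Matrix (ι × Bool) (ι × Bool) ℝ} {G Ψ : Matrix ι ι ℝ}
    (hG : ∀ i s j, P (i, s) (j, true) + P (i, s) (j, false) = G i j)
    (hΨ : ∀ i j, P (i, true) (j, true) - P (i, false) (j, true) = Ψ i j) {t : ℝ}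
    (h : IsRealEigenvalue P t) : IsRealEigenvalue G t ∨ IsRealEigenvalue Ψ t := by
  obtain ⟨v, hv, hPv⟩ := h
  by_cases hdiff : stateDiff v = 0
  · left
    obtain ⟨u, rfl⟩ := stateDiff_eq_zero_iff.mp hdiff
    refine ⟨u, fun hu => hv (by rw [hu]; rfl), funext fun i => ?_⟩
    rw [mulVec_comp_fst hG] at hPv
    exact congrFun hPv (i, true)
  · refine Or.inr ⟨stateDiff v, hdiff, ?_⟩
    rw [← stateDiff_mulVec hG hΨ, hPv]
    exact funext fun i => (mul_sub t _ _).symm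

section Probability

theorem prE_and_add_prE_not_and (ν : Finset (Fin n) → ℝ) (E F : Finset (Fin n) → Prop) :
    prE ν (fun S => E S ∧ F S) + prE ν (fun S => ¬ E S ∧ F S) = prE ν F := by
  unfold prE
  rw [← sum_add_distrib]
  refine sum_congr rfl fun S _ => ?_
  by_cases hE : E S <;> simp [hE]

theorem condPrE_add_condPrE_not {ν : Finset (Fin n) → ℝ} {F : Finset (Fin n) → Prop}
    (hF : prE ν F ≠ 0) (E : Finset (Fin n) → Prop) :
    condPrE ν E F + condPrE ν (fun S => ¬ E S) F = 1 := by
  rw [condPrE, condPrE, ← add_div, prE_and_add_prE_not_and, div_self hF]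

variable {μ : Finset (Fin n) → ℝ} {A B : Finset (Fin n)}

theorem Feasible.prE_pin_true (hf : Feasible μ A B) : prE (pin μ A B) (fun _ => True) = 1 := by
  refine Eq.trans ?_ (div_self hf.ne')
  simp only [prE, pin, if_true, sum_div, ite_div, zero_div]

theorem Feasible.prE_pin_not (hf : Feasible μ A B) (E : Finset (Fin n) → Prop) :
    prE (pin μ A B) (fun S => ¬ E S) = 1 - prE (pin μ A B) E := by
  rw [eq_sub_iff_add_eq', ← hf.prE_pin_true]
  simpa only [and_true] using prE_and_add_prE_not_and (pin μ A B) E fun _ => True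

theorem Feasible.prE_pin_stateEvent_pos (hf : Feasible μ A B) {i : Fin n}
    (hi : 0 < prE (pin μ A B) (fun S => i ∈ S) ∧ prE (pin μ A B) (fun S => i ∈ S) < 1)
    (s : Bool) : 0 < prE (pin μ A B) (stateEvent i s) := by
  cases s
  · exact (sub_pos.mpr hi.2).trans_eq (hf.prE_pin_not fun S => i ∈ S).symm
  · exact hi.1

end Probability

section Walk

variable {μ : Finset (Fin n) → ℝ} {A B : Finset (Fin n)}

theorem pinnedWalk_sum_target_state {i : {i : Fin n // i ∉ A ∪ B}} {s : Bool}
    (hi : prE (pin μ A B) (stateEvent i.1 s) ≠ 0) (j : {i : Fin n // i ∉ A ∪ B}) :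
    pinnedWalk μ A B (i, s) (j, true) + pinnedWalk μ A B (i, s) (j, false) =
      (((n : ℝ) - (A.card + B.card) - 1)⁻¹ • (⊤ : SimpleGraph _).adjMatrix ℝ) i j := by
  have hcond : condPrE (pin μ A B) (stateEvent j.1 true) (stateEvent i.1 s) +
      condPrE (pin μ A B) (stateEvent j.1 false) (stateEvent i.1 s) = 1 :=
    condPrE_add_condPrE_not hi _
  by_cases hij : i = j
  · simp [pinnedWalk, hij]
  · simp [pinnedWalk, hij, ← mul_add, hcond]

theorem pinnedWalk_sub_source_state {i : {i : Fin n // i ∉ A ∪ B}}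
    (hi : ∀ s, 0 < prE (pin μ A B) (stateEvent i.1 s)) (j : {i : Fin n // i ∉ A ∪ B}) :
    pinnedWalk μ A B (i, true) (j, true) - pinnedWalk μ A B (i, false) (j, true) =
      (((n : ℝ) - (A.card + B.card) - 1)⁻¹ •
        (pinnedPsi μ A B).submatrix Subtype.val Subtype.val) i j := by
  rw [Matrix.smul_apply, Matrix.submatrix_apply, smul_eq_mul]
  by_cases hij : i = j
  · simp [pinnedWalk, pinnedPsi, hij]
  · rw [pinnedWalk, pinnedWalk, if_neg hij, if_neg hij, ← mul_sub, one_div, pinnedPsi,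
      if_pos ⟨Subtype.coe_ne_coe.mpr hij, i.2, j.2, hi true, hi false⟩]
    rfl

theorem card_notMem_union (hAB : Disjoint A B) :
    (Fintype.card {i : Fin n // i ∉ A ∪ B} : ℝ) = n - (A.card + B.card) := by
  rw [Fintype.card_of_subtype (A ∪ B)ᶜ fun _ => mem_compl, eq_sub_iff_add_eq, ← Nat.cast_add,
    ← card_union_of_disjoint hAB, ← Nat.cast_add, card_compl_add_card, Fintype.card_fin]

theorem IsRealEigenvalue.eq_one_or_of_pinnedWalk (hAB : Disjoint A B)
    (hk : A.card + B.card + 1 ≠ n)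
    (hpos : ∀ i ∉ A ∪ B, ∀ s, 0 < prE (pin μ A B) (stateEvent i s)) {t : ℝ}
    (h : IsRealEigenvalue (pinnedWalk μ A B) t) :
    t = 1 ∨ ((n : ℝ) - (A.card + B.card) - 1) * t = -1 ∨
      IsRealEigenvalue (pinnedPsi μ A B) (((n : ℝ) - (A.card + B.card) - 1) * t) := by
  have hm : (n : ℝ) - (A.card + B.card) - 1 ≠ 0 := by
    rw [sub_sub, sub_ne_zero]
    exact_mod_cast hk.symm
  rcases h.or_of_stateBlocks
    (fun i s => pinnedWalk_sum_target_state (hpos i i.2 s).ne')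
    (fun i => pinnedWalk_sub_source_state (hpos i i.2)) with hG | hΨ
  · have hG' := (hG.of_smul (inv_ne_zero hm)).eq_neg_one_or_of_adjMatrix_top
    rw [inv_inv, card_notMem_union hAB] at hG'
    rcases hG' with hneg | hone
    · exact Or.inr (Or.inl hneg)
    · exact Or.inl ((mul_eq_left₀ hm).mp hone)
  · have hΨ' := hΨ.of_smul (inv_ne_zero hm)
    rw [inv_inv] at hΨ'
    refine Or.inr (Or.inr (hΨ'.of_submatrix Subtype.val_injective fun i hi => ?_))
    rw [Subtype.range_coe_subtype] at hi
    exact funext fun j => if_neg fun h => hi h.2.1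

end Walk

theorem statement1_general {μ : Finset (Fin n) → ℝ} {A B : Finset (Fin n)} (hAB : Disjoint A B)
    (hf : Feasible μ A B) (hk : A.card + B.card + 2 ≤ n) {η : ℝ} (hη : 0 ≤ η)
    (hnondeg : ∀ i ∉ A ∪ B, 0 < prE (pin μ A B) (fun S => i ∈ S) ∧
      prE (pin μ A B) (fun S => i ∈ S) < 1)
    (hΨ : ∀ t, IsRealEigenvalue (pinnedPsi μ A B) t → t ≤ η) {t : ℝ}
    (ht : IsRealEigenvalue (pinnedWalk μ A B) t) (ht1 : t ≠ 1) :
    t ≤ η / ((n : ℝ) - (A.card + B.card) - 1) := by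
  have hm : 0 < (n : ℝ) - (A.card + B.card) - 1 := by
    have : (A.card + B.card + 2 : ℝ) ≤ n := by exact_mod_cast hk
    linarith
  have hpos (i) (hi : i ∉ A ∪ B) := hf.prE_pin_stateEvent_pos (hnondeg i hi)
  rw [le_div_iff₀' hm]
  rcases ht.eq_one_or_of_pinnedWalk hAB (by omega) hpos with h1 | hneg | hΨt
  · exact absurd h1 ht1
  · linarith
  · exact hΨ _ hΨt

/-- Under nondegeneracy of all pinned marginals, spectral
independence implies that for every feasible pinning `(A,B)` with
`|A| + |B| = k ≤ n - 2`, every real eigenvalue `t ≠ 1` of the walk matrix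
`P_{A,B}` satisfies `t ≤ η k / (n - k - 1)`. -/
theorem statement1 (n : ℕ) (hn : 2 ≤ n) (μ : Finset (Fin n) → ℝ)
    (hpos : ∀ S, 0 ≤ μ S) (hsum : ∑ S : Finset (Fin n), μ S = 1)
    (η : ℕ → ℝ) (hη : ∀ k, k ≤ n - 2 → 0 ≤ η k)
    (hnondeg : ∀ A B : Finset (Fin n), Disjoint A B → Feasible μ A B →
      A.card + B.card ≤ n - 2 → ∀ i : Fin n, i ∉ A ∪ B →
        0 < prE (pin μ A B) (fun S => i ∈ S)
          ∧ prE (pin μ A B) (fun S => i ∈ S) < 1)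
    (hSI : SpectrallyIndependent μ η) :
    ∀ A B : Finset (Fin n), Disjoint A B → Feasible μ A B →
      A.card + B.card ≤ n - 2 →
      ∀ t : ℝ, IsRealEigenvalue (pinnedWalk μ A B) t → t ≠ 1 →
        t ≤ η (A.card + B.card) / ((n : ℝ) - (A.card + B.card) - 1) := by
  intro A B hAB hf hk t ht ht1
  exact statement1_general hAB hf (by omega) (hη _ hk) (hnondeg A B hAB hf hk)
    (hSI A B hAB hf hk) ht ht1

end PaperStmt
end
end

section
/- There is a universal constant c ≥ 1 with the following property. Let Δ ≥ 3 be an integer, δ ∈ (0,1), λ = (1−δ)·λ_c(Δ), and let G be a simple graph on [n] (n ≥ 2) of maximum degree at most Δ. Then the hardcore distribution μ = μ_{G,λ} is (η_0,…,η_{n−2})-spectrally independent with η_k = min{exp(c/δ), (λ/(1+λ))·(n−k−1)}; that is, for every feasible pinning (A,B) with |A|+|B| = k ≤ n−2, every real eigenvalue of Ψ_{A,B} is at most min{exp(c/δ), (λ/(1+λ))·(n−k−1)}. -/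
open scoped Classical
open Finset

noncomputable section

namespace PaperStmt

variable {n : ℕ}

/-- `S` is an independent set of `G`. -/
def IsIndepSet (G : SimpleGraph (Fin n)) (S : Finset (Fin n)) : Prop :=
  ∀ i ∈ S, ∀ j ∈ S, ¬ G.Adj i j

/-- The hardcore partition function `Z_G(λ)`. -/
def hardcoreZ (G : SimpleGraph (Fin n)) (lam : ℝ) : ℝ :=
  ∑ S : Finset (Fin n), if IsIndepSet G S then lam ^ S.card else 0

/-- The hardcore distribution `μ_{G,λ}`. -/
def hardcore (G : SimpleGraph (Fin n)) (lam : ℝ) : Finset (Fin n) → ℝ :=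
  fun S => if IsIndepSet G S then lam ^ S.card / hardcoreZ G lam else 0

/-- The uniqueness threshold `λ_c(Δ) = (Δ-1)^(Δ-1) / (Δ-2)^Δ`. -/
def lamC (Δ : ℕ) : ℝ := ((Δ : ℝ) - 1) ^ (Δ - 1) / ((Δ : ℝ) - 2) ^ Δ

/-!
The influences of `i` on the other vertices measure how the marginals react to pinning `i`, so by
Gershgorin it suffices to bound the absolute row sums of the influence matrix. After a pinning the
hardcore model is again a hardcore model, on the vertices that remain free.

Deleting a vertex which is occupied with probability `q` and has total influence `I` on the others
moves the vector of marginals by `q (1 + I)` in `ℓ¹`. Occupying `r` amounts to deleting `r` and then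
its neighbours, one at a time, so `I_r ≤ ∑ q_u (1 + I_u)` over the neighbours `u` of `r`, while
`q_r = λ ∏ (1 - q_u) / (1 + λ ∏ (1 - q_u))`; the `q_u`, `I_u` refer to smaller vertex sets in which
`u` has lost the neighbour `r` and hence has at most `D = Δ - 1` neighbours. Below the threshold,
`√q_r ∑ √q_u ≤ 1 - δ / 10`: by AM-GM and Cauchy–Schwarz one may assume that there are `D` equal
`q_u`, and then `λ_c` is a reciprocal maximum. By induction `√q_u (1 + I_u)` is bounded by
`10 / δ * √(λ / (1 + λ))`, and since `Δ λ_c(Δ) ≤ 12` one last step bounds `I_r` by `120 / δ`, which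
is less than `exp (120 / δ)`.
-/

section Analysis

variable {ι : Type*} {s : Finset ι} {q : ι → ℝ}

lemma div_one_add_le_div_one_add {a b : ℝ} (ha : 0 ≤ a) (hab : a ≤ b) :
    a / (1 + a) ≤ b / (1 + b) := by
  rw [div_le_div_iff₀ (by linarith) (by linarith)]
  linarith

lemma mul_le_sqrt_mul_of_sqrt_mul_le {x a K : ℝ} (hx : 0 ≤ x) (h : √x * a ≤ K) :
    x * a ≤ √x * K := by
  calc x * a = √x * (√x * a) := by rw [← mul_assoc, Real.mul_self_sqrt hx]
    _ ≤ √x * K := by gcongr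

lemma sum_div_natCast_le_one {D : ℕ} (hs : #s ≤ D) (hq : ∀ i ∈ s, q i ≤ 1) :
    (∑ i ∈ s, q i) / D ≤ 1 := by
  refine div_le_one_of_le₀ ?_ D.cast_nonneg
  calc ∑ i ∈ s, q i ≤ #s • (1 : ℝ) := sum_le_card_nsmul s q 1 hq
    _ ≤ D := by simpa using hs

lemma prod_le_sum_div_card_pow (hq : ∀ i ∈ s, 0 ≤ q i) :
    ∏ i ∈ s, q i ≤ ((∑ i ∈ s, q i) / #s) ^ #s := by
  rcases s.eq_empty_or_nonempty with rfl | hs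
  · simp
  have amgm := Real.geom_mean_le_arith_mean s (fun _ => 1) q (fun _ _ => zero_le_one)
    (by simpa using hs) hq
  simp only [Real.rpow_one, sum_const, nsmul_eq_mul, mul_one, one_mul] at amgm
  calc ∏ i ∈ s, q i = ((∏ i ∈ s, q i) ^ (#s : ℝ)⁻¹) ^ #s :=
        (Real.rpow_inv_natCast_pow (prod_nonneg hq) hs.card_ne_zero).symm
    _ ≤ ((∑ i ∈ s, q i) / #s) ^ #s := by
        gcongr
        exact Real.rpow_nonneg (prod_nonneg hq) _

lemma prod_one_sub_le_pow {D : ℕ} (hs : #s ≤ D) (hq : ∀ i ∈ s, q i ≤ 1) :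
    ∏ i ∈ s, (1 - q i) ≤ (1 - (∑ i ∈ s, q i) / D) ^ D := by
  -- Pad the product with factors `1` until it has exactly `D` factors.
  let t : Finset (ι ⊕ Fin (D - #s)) := s.disjSum univ
  let q' : ι ⊕ Fin (D - #s) → ℝ := Sum.elim q 0
  have card_t : #t = D := by simp [t, hs]
  have sum_t : ∑ i ∈ t, (1 - q' i) = D - ∑ i ∈ s, q i := by
    rw [sum_sub_distrib, sum_const, card_t, nsmul_one]
    simp [t, q', sum_disjSum]
  have amgm := prod_le_sum_div_card_pow (s := t) (q := fun i => 1 - q' i)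
    (by rintro (i | i) hi <;> simp_all [t, q'])
  rw [sum_t, card_t] at amgm
  rcases D.eq_zero_or_pos with rfl | hD
  · simpa [t, q', prod_disjSum] using amgm
  · rwa [prod_disjSum, sub_div, div_self (by positivity), show ∏ i, (1 - q' (Sum.inr i)) = 1 by
      simp [q'], mul_one] at amgm

lemma sq_sum_sqrt_le {D : ℕ} (hs : #s ≤ D) (hq : ∀ i ∈ s, 0 ≤ q i) :
    (∑ i ∈ s, √(q i)) ^ 2 ≤ D * ∑ i ∈ s, q i := by
  calc (∑ i ∈ s, √(q i)) ^ 2 ≤ #s * ∑ i ∈ s, √(q i) ^ 2 := sq_sum_le_card_mul_sum_sq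
    _ = #s * ∑ i ∈ s, q i := by rw [sum_congr rfl fun i hi => Real.sq_sqrt (hq i hi)]
    _ ≤ D * ∑ i ∈ s, q i := by
        have := sum_nonneg hq
        gcongr

lemma pow_mul_add_one_sub_mul_le_one (D : ℕ) {u : ℝ} (hu : 0 ≤ u) :
    u ^ D * (D + 1 - D * u) ≤ 1 := by
  induction D with
  | zero => simp
  | succ D ih =>
    calc u ^ (D + 1) * (((D + 1 : ℕ) : ℝ) + 1 - ((D + 1 : ℕ) : ℝ) * u)
        = u ^ D * (D + 1 - D * u) - (D + 1) * u ^ D * (u - 1) ^ 2 := by push_cast; ring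
      _ ≤ 1 := by linarith [show 0 ≤ (D + 1) * u ^ D * (u - 1) ^ 2 by positivity]

lemma quarter_le_one_sub_inv_pow {k : ℕ} (hk : 2 ≤ k) : 1 / 4 ≤ (1 - (k : ℝ)⁻¹) ^ k := by
  have hk' : (2 : ℝ) ≤ k := by exact_mod_cast hk
  have inv_le : (k : ℝ)⁻¹ ≤ 1 := inv_le_one_of_one_le₀ (by linarith)
  have half_le : 1 / 2 ≤ (1 - (k : ℝ)⁻¹) ^ ((k : ℝ) / 2) := by
    have bernoulli := one_add_mul_self_le_rpow_one_add (s := -(k : ℝ)⁻¹) (by linarith)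
      (show 1 ≤ (k : ℝ) / 2 by linarith)
    rw [← sub_eq_add_neg] at bernoulli
    convert bernoulli using 1
    field_simp
    norm_num
  calc (1 : ℝ) / 4 = (1 / 2) ^ 2 := by norm_num
    _ ≤ ((1 - (k : ℝ)⁻¹) ^ ((k : ℝ) / 2)) ^ 2 := by gcongr
    _ = (1 - (k : ℝ)⁻¹) ^ k := by
        rw [← Real.rpow_mul_natCast (by linarith), Nat.cast_two, div_mul_cancel₀ _ two_ne_zero,
          Real.rpow_natCast]

end Analysis

section Threshold

lemma lamC_pos {Δ : ℕ} (hΔ : 3 ≤ Δ) : 0 < lamC Δ := by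
  have : (3 : ℝ) ≤ Δ := by exact_mod_cast hΔ
  exact div_pos (pow_pos (by linarith) _) (pow_pos (by linarith) _)

variable {D : ℕ}

lemma lamC_add_one (D : ℕ) : lamC (D + 1) = (D : ℝ) ^ D / ((D : ℝ) - 1) ^ (D + 1) := by
  rw [lamC, Nat.add_sub_cancel]
  push_cast
  ring_nf

lemma lamC_add_one_mul_le_four (hD : 2 ≤ D) : lamC (D + 1) * (D - 1) ≤ 4 := by
  have hD' : (2 : ℝ) ≤ D := by exact_mod_cast hD
  have hD1 : (D : ℝ) - 1 ≠ 0 := by linarith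
  calc lamC (D + 1) * (D - 1) = ((1 - (D : ℝ)⁻¹) ^ D)⁻¹ := by
        rw [lamC_add_one, inv_eq_one_div (D : ℝ), one_sub_div (by positivity), div_pow]
        field_simp
        ring
    _ ≤ (1 / 4)⁻¹ := by gcongr; exact quarter_le_one_sub_inv_pow hD
    _ = 4 := by norm_num

lemma lamC_add_one_le_four (hD : 2 ≤ D) : lamC (D + 1) ≤ 4 := by
  have hD' : (2 : ℝ) ≤ D := by exact_mod_cast hD
  nlinarith [lamC_add_one_mul_le_four hD, lamC_pos (Nat.succ_le_succ hD)]

lemma add_one_mul_lamC_add_one_le (hD : 2 ≤ D) : (D + 1) * lamC (D + 1) ≤ 12 := by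
  linarith [lamC_add_one_mul_le_four hD, lamC_add_one_le_four hD]

/- By `pow_mul_add_one_sub_mul_le_one` at `u = D (1 - x) / (D - 1)`, `λ_c(D + 1)` is the reciprocal
of the maximum of `x ↦ (1 - x) ^ D * (D ^ 2 * x - 1)`. -/
lemma lamC_add_one_mul_pow_mul_le_one (hD : 2 ≤ D) {x : ℝ} (hx : x ≤ 1) :
    lamC (D + 1) * ((1 - x) ^ D * (D ^ 2 * x - 1)) ≤ 1 := by
  have hD' : (2 : ℝ) ≤ D := by exact_mod_cast hD
  have hD1 : (D : ℝ) - 1 ≠ 0 := by linarith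
  have hu : 0 ≤ D * (1 - x) / ((D : ℝ) - 1) :=
    div_nonneg (mul_nonneg (by linarith) (by linarith)) (by linarith)
  refine le_of_eq_of_le ?_ (pow_mul_add_one_sub_mul_le_one D hu)
  rw [lamC_add_one, div_pow, mul_pow, pow_succ ((D : ℝ) - 1)]
  field_simp
  ring

variable {δ lam : ℝ}

lemma le_lamC_add_one (hD : 2 ≤ D) (hδ : 0 ≤ δ) (hle : lam ≤ (1 - δ) * lamC (D + 1)) :
    lam ≤ lamC (D + 1) :=
  hle.trans (mul_le_of_le_one_left (lamC_pos (Nat.succ_le_succ hD)).le (by linarith))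

lemma le_one_of_le_lamC_add_one (hD : 2 ≤ D) (hlam : 0 ≤ lam)
    (hle : lam ≤ (1 - δ) * lamC (D + 1)) : δ ≤ 1 := by
  linarith [nonneg_of_mul_nonneg_left (hlam.trans hle) (lamC_pos (Nat.succ_le_succ hD))]

lemma div_one_add_mul_sq_mul_le (hD : 2 ≤ D) (hδ : 0 ≤ δ) (hlam : 0 ≤ lam)
    (hle : lam ≤ (1 - δ) * lamC (D + 1)) {x : ℝ} (hx0 : 0 ≤ x) (hx1 : x ≤ 1) :
    lam * (1 - x) ^ D / (1 + lam * (1 - x) ^ D) * (D ^ 2 * x) ≤ 1 - δ / 5 := by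
  have hδ1 : 0 ≤ 1 - δ := by linarith [le_one_of_le_lamC_add_one hD hlam hle]
  set b := (1 - x) ^ D
  have hb0 : 0 ≤ b := pow_nonneg (by linarith) D
  have hb1 : b ≤ 1 := pow_le_one₀ (by linarith) (by linarith)
  have hlb0 : 0 ≤ lam * b := mul_nonneg hlam hb0
  have hlb4 : lam * b ≤ 4 :=
    (mul_le_of_le_one_right hlam hb1).trans
      ((le_lamC_add_one hD hδ hle).trans (lamC_add_one_le_four hD))
  have below_threshold : lam * (b * (D ^ 2 * x - 1)) ≤ 1 - δ := by
    rcases le_total 0 (b * (D ^ 2 * x - 1)) with h | h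
    · calc lam * (b * (D ^ 2 * x - 1)) ≤ (1 - δ) * lamC (D + 1) * (b * (D ^ 2 * x - 1)) := by
            gcongr
        _ ≤ (1 - δ) * 1 := by
            rw [mul_assoc]
            gcongr
            exact lamC_add_one_mul_pow_mul_le_one hD hx1
        _ = 1 - δ := mul_one _
    · exact (mul_nonpos_of_nonneg_of_nonpos hlam h).trans hδ1
  rw [div_mul_eq_mul_div, div_le_iff₀ (by linarith)]
  nlinarith

/- One step of the tree recursion `q = λ ∏ (1 - qᵢ) / (1 + λ ∏ (1 - qᵢ))` contracts when distances
are measured in the potential with derivative `1 / √q`. -/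
lemma sqrt_mul_sum_sqrt_le {ι : Type*} {s : Finset ι} {q : ι → ℝ} (hD : 2 ≤ D) (hs : #s ≤ D)
    (hq0 : ∀ i ∈ s, 0 ≤ q i) (hq1 : ∀ i ∈ s, q i ≤ 1) (hδ : 0 ≤ δ) (hlam : 0 ≤ lam)
    (hle : lam ≤ (1 - δ) * lamC (D + 1)) :
    √(lam * (∏ i ∈ s, (1 - q i)) / (1 + lam * ∏ i ∈ s, (1 - q i))) * ∑ i ∈ s, √(q i)
      ≤ 1 - δ / 10 := by
  have hδ1 := le_one_of_le_lamC_add_one hD hlam hle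
  set a := ∏ i ∈ s, (1 - q i)
  set x := (∑ i ∈ s, q i) / D with hx
  have hx0 : 0 ≤ x := div_nonneg (sum_nonneg hq0) D.cast_nonneg
  have hx1 : x ≤ 1 := sum_div_natCast_le_one hs hq1
  have ha : 0 ≤ lam * a := mul_nonneg hlam (prod_nonneg fun i hi => sub_nonneg.mpr (hq1 i hi))
  have hab : lam * a ≤ lam * (1 - x) ^ D :=
    mul_le_mul_of_nonneg_left (prod_one_sub_le_pow hs hq1) hlam
  refine le_of_sq_le_sq ?_ (by linarith)
  calc (√(lam * a / (1 + lam * a)) * ∑ i ∈ s, √(q i)) ^ 2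
      = lam * a / (1 + lam * a) * (∑ i ∈ s, √(q i)) ^ 2 := by
        rw [mul_pow, Real.sq_sqrt (by positivity)]
    _ ≤ lam * (1 - x) ^ D / (1 + lam * (1 - x) ^ D) * (D ^ 2 * x) := by
        refine mul_le_mul (div_one_add_le_div_one_add ha hab) ?_ (sq_nonneg _)
          (div_nonneg (ha.trans hab) (by linarith))
        calc (∑ i ∈ s, √(q i)) ^ 2 ≤ D * ∑ i ∈ s, q i := sq_sum_sqrt_le hs hq0
          _ = D ^ 2 * x := by rw [hx]; field_simp
    _ ≤ 1 - δ / 5 := div_one_add_mul_sq_mul_le hD hδ hlam hle hx0 hx1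
    _ ≤ (1 - δ / 10) ^ 2 := by nlinarith [sq_nonneg δ]

end Threshold

section Degree

variable {V : Type*} [Finite V] (G : SimpleGraph V) {D : ℕ}

lemma card_filter_adj_le (hdeg : ∀ v, (G.neighborSet v).ncard ≤ D) (W : Finset V)
    (v : V) : #(W.filter (G.Adj v)) ≤ D := by
  refine le_trans ?_ (hdeg v)
  rw [← Set.ncard_coe_finset]
  exact Set.ncard_le_ncard fun u hu => (mem_filter.mp hu).2

lemma card_filter_adj_le_of_adj_notMem (hdeg : ∀ v, (G.neighborSet v).ncard ≤ D + 1)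
    {u r : V} {W : Finset V} (hur : G.Adj u r) (hr : r ∉ W) : #(W.filter (G.Adj u)) ≤ D := by
  have := card_filter_adj_le G hdeg (insert r W) u
  rw [filter_insert, if_pos hur, card_insert_of_notMem (by simp [hr])] at this
  exact Nat.le_of_succ_le_succ this

end Degree

section EventWeight

variable {V : Type*}

/-- The total weight `∑ λ ^ |S|` of the independent sets `S ⊆ W` satisfying `E`: the unnormalized
probability of `E` in the hardcore model on the subgraph induced by `W`. -/
def eventWeight (G : SimpleGraph V) (lam : ℝ) (W : Finset V) (E : Finset V → Prop) : ℝ :=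
  ∑ S ∈ W.powerset.filter fun S : Finset V => G.IsIndepSet S ∧ E S, lam ^ #S

/-- The partition function of the hardcore model on the subgraph induced by `W`. -/
def partitionFn (G : SimpleGraph V) (lam : ℝ) (W : Finset V) : ℝ :=
  eventWeight G lam W fun _ => True

/-- The probability that `v` is occupied in the hardcore model on the subgraph induced by `W`;
it is `0` when `v ∉ W`. -/
def marginal (G : SimpleGraph V) (lam : ℝ) (W : Finset V) (v : V) : ℝ :=
  eventWeight G lam W (fun S => v ∈ S) / partitionFn G lam W

variable (G : SimpleGraph V) {lam : ℝ} {W A B : Finset V} {r v : V}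

lemma eventWeight_nonneg (hlam : 0 ≤ lam) (E : Finset V → Prop) : 0 ≤ eventWeight G lam W E :=
  sum_nonneg fun _ _ => pow_nonneg hlam _

lemma eventWeight_mem_of_notMem (hv : v ∉ W) : eventWeight G lam W (fun S => v ∈ S) = 0 := by
  refine sum_eq_zero fun S hS => ?_
  simp only [mem_filter, mem_powerset] at hS
  exact absurd (hS.1 hS.2.2) hv

lemma partitionFn_pos (hlam : 0 ≤ lam) (W : Finset V) : 0 < partitionFn G lam W :=
  sum_pos' (fun _ _ => pow_nonneg hlam _) ⟨∅, by simp [Set.Pairwise], by simp⟩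

lemma eventWeight_mono (hlam : 0 ≤ lam) {U W : Finset V} (h : U ⊆ W) (E : Finset V → Prop) :
    eventWeight G lam U E ≤ eventWeight G lam W E :=
  sum_le_sum_of_subset_of_nonneg (filter_subset_filter _ (powerset_mono.mpr h))
    fun _ _ _ => pow_nonneg hlam _

lemma eventWeight_add_eventWeight_not (E F : Finset V → Prop) :
    eventWeight G lam W (fun S => E S ∧ F S) + eventWeight G lam W (fun S => E S ∧ ¬ F S)
      = eventWeight G lam W E := by
  simp only [eventWeight, ← and_assoc]
  simpa only [filter_filter] using
    sum_filter_add_sum_filter_not (W.powerset.filter fun S : Finset V => G.IsIndepSet S ∧ E S) F _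

lemma marginal_nonneg (hlam : 0 ≤ lam) (W : Finset V) (v : V) : 0 ≤ marginal G lam W v :=
  div_nonneg (eventWeight_nonneg G hlam _) (partitionFn_pos G hlam W).le

lemma marginal_of_notMem (hv : v ∉ W) : marginal G lam W v = 0 := by
  rw [marginal, eventWeight_mem_of_notMem G hv, zero_div]

variable [DecidableEq V]

/-- The vertices of `W` left undetermined once those in `A` are occupied and those in `B` are
unoccupied; neighbours of `A` are then forced to be unoccupied. -/
def freeVertices (G : SimpleGraph V) (W A B : Finset V) : Finset V :=
  {v ∈ W | v ∉ A ∧ v ∉ B ∧ ∀ a ∈ A, ¬ G.Adj a v}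

/-- The vertices of `W` outside the closed neighbourhood of `r`. -/
def nonNeighbors (G : SimpleGraph V) (W : Finset V) (r : V) : Finset V :=
  {v ∈ W | v ≠ r ∧ ¬ G.Adj r v}

lemma nonNeighbors_eq_sdiff (W : Finset V) (r : V) :
    nonNeighbors G W r = W.erase r \ {v ∈ W | G.Adj r v} := by
  ext v
  simp only [nonNeighbors, mem_filter, mem_sdiff, mem_erase]
  tauto

lemma isIndepSet_union_of_subset_freeVertices {T : Finset V} (hA : G.IsIndepSet A)
    (hT : T ⊆ freeVertices G W A B) :
    G.IsIndepSet (A ∪ T : Finset V) ↔ G.IsIndepSet T := by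
  refine ⟨fun h => h.mono (by simp), fun h => ?_⟩
  have not_adj : ∀ a ∈ A, ∀ t ∈ T, ¬ G.Adj a t := fun a ha t ht =>
    (mem_filter.mp (hT ht)).2.2.2 a ha
  rw [coe_union]
  intro a ha b hb hab
  rcases ha with ha | ha <;> rcases hb with hb | hb
  · exact hA ha hb hab
  · exact not_adj a ha b hb
  · exact fun adj => not_adj b hb a ha adj.symm
  · exact h ha hb hab

lemma eventWeight_pinned (hA : G.IsIndepSet A) (hAW : A ⊆ W) (hAB : Disjoint A B)
    (E : Finset V → Prop) :
    eventWeight G lam W (fun S => (A ⊆ S ∧ Disjoint B S) ∧ E S)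
      = lam ^ #A * eventWeight G lam (freeVertices G W A B) fun T => E (A ∪ T) := by
  have free {T : Finset V} (hT : T ⊆ freeVertices G W A B) {v : V} (hv : v ∈ T) :
      v ∈ W ∧ v ∉ A ∧ v ∉ B := by
    have := mem_filter.mp (hT hv)
    tauto
  rw [eventWeight, eventWeight, mul_sum]
  refine sum_nbij' (· \ A) (A ∪ ·) ?_ ?_ ?_ ?_ ?_
  · simp only [mem_filter, mem_powerset]
    rintro S ⟨hSW, hS, ⟨hAS, hBS⟩, hE⟩
    refine ⟨fun v hv => ?_, hS.mono (by simp), by rwa [union_sdiff_of_subset hAS]⟩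
    rw [mem_sdiff] at hv
    refine mem_filter.mpr ⟨hSW hv.1, hv.2, disjoint_right.mp hBS hv.1, fun a ha => ?_⟩
    exact hS (hAS ha) hv.1 fun h => hv.2 (h ▸ ha)
  · simp only [mem_filter, mem_powerset]
    rintro T ⟨hT, hind, hE⟩
    refine ⟨union_subset hAW fun v hv => (free hT hv).1,
      (isIndepSet_union_of_subset_freeVertices G hA hT).mpr hind,
      ⟨subset_union_left, ?_⟩, hE⟩
    exact disjoint_union_right.mpr ⟨hAB.symm, disjoint_right.mpr fun v hv => (free hT hv).2.2⟩
  · simp only [mem_filter]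
    rintro S ⟨-, -, ⟨hAS, -⟩, -⟩
    exact union_sdiff_of_subset hAS
  · simp only [mem_filter, mem_powerset]
    rintro T ⟨hT, -⟩
    exact union_sdiff_cancel_left (disjoint_right.mpr fun v hv => (free hT hv).2.1)
  · simp only [mem_filter]
    rintro S ⟨-, -, ⟨hAS, -⟩, -⟩
    rw [← pow_add, add_comm, card_sdiff_add_card_eq_card hAS]

lemma eventWeight_and_mem (hr : r ∈ W) (E : Finset V → Prop) :
    eventWeight G lam W (fun S => E S ∧ r ∈ S)
      = lam * eventWeight G lam (nonNeighbors G W r) fun T => E (insert r T) := by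
  have free_eq : freeVertices G W {r} ∅ = nonNeighbors G W r := by
    simp [freeVertices, nonNeighbors]
  have := eventWeight_pinned G (lam := lam) (A := {r}) (B := ∅) (by simp)
    (singleton_subset_iff.mpr hr) (disjoint_empty_right _) E
  simpa only [singleton_subset_iff, disjoint_empty_left, and_true, card_singleton, pow_one,
    free_eq, singleton_union, and_comm, true_and] using this

lemma eventWeight_and_notMem (W : Finset V) (r : V) (E : Finset V → Prop) :
    eventWeight G lam W (fun S => E S ∧ r ∉ S) = eventWeight G lam (W.erase r) E := by
  refine sum_congr ?_ fun _ _ => rfl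
  ext S
  simp only [mem_filter, mem_powerset, subset_erase]
  tauto

lemma eventWeight_mem (hr : r ∈ W) :
    eventWeight G lam W (fun S => r ∈ S) = lam * partitionFn G lam (nonNeighbors G W r) := by
  simpa only [true_and, partitionFn] using eventWeight_and_mem G hr fun _ => True

lemma partitionFn_eq_add (hr : r ∈ W) :
    partitionFn G lam W
      = lam * partitionFn G lam (nonNeighbors G W r) + partitionFn G lam (W.erase r) := by
  rw [partitionFn, ← eventWeight_add_eventWeight_not G _ fun S => r ∈ S,
    eventWeight_and_mem G hr, eventWeight_and_notMem]
  rfl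

lemma eventWeight_mem_eq_add (hr : r ∈ W) (hvr : v ≠ r) :
    eventWeight G lam W (fun S => v ∈ S)
      = lam * eventWeight G lam (nonNeighbors G W r) (fun S => v ∈ S)
        + eventWeight G lam (W.erase r) fun S => v ∈ S := by
  rw [← eventWeight_add_eventWeight_not G _ fun S => r ∈ S, eventWeight_and_mem G hr,
    eventWeight_and_notMem]
  simp only [mem_insert, hvr, false_or]

lemma marginal_self (hr : r ∈ W) :
    marginal G lam W r = lam * partitionFn G lam (nonNeighbors G W r) / partitionFn G lam W := by
  rw [marginal, eventWeight_mem G hr]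

lemma one_sub_marginal (hlam : 0 ≤ lam) (hr : r ∈ W) :
    1 - marginal G lam W r = partitionFn G lam (W.erase r) / partitionFn G lam W := by
  rw [marginal_self G hr, one_sub_div (partitionFn_pos G hlam W).ne']
  congr 1
  linarith [partitionFn_eq_add G (lam := lam) hr]

lemma marginal_eq_div_one_add (hlam : 0 ≤ lam) (hr : r ∈ W) :
    marginal G lam W r
      = lam * (partitionFn G lam (nonNeighbors G W r) / partitionFn G lam (W.erase r))
        / (1 + lam * (partitionFn G lam (nonNeighbors G W r) / partitionFn G lam (W.erase r))) := by
  have := partitionFn_pos G hlam (W.erase r)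
  rw [marginal_self G hr, partitionFn_eq_add G hr, add_comm]
  field_simp

omit [DecidableEq V] in
lemma marginal_le (hlam : 0 ≤ lam) (W : Finset V) (v : V) :
    marginal G lam W v ≤ lam / (1 + lam) := by
  by_cases hv : v ∈ W
  · have erase_pos := partitionFn_pos G hlam (W.erase v)
    have ratio_nonneg := div_nonneg (partitionFn_pos G hlam (nonNeighbors G W v)).le erase_pos.le
    have ratio_le : partitionFn G lam (nonNeighbors G W v) / partitionFn G lam (W.erase v) ≤ 1 := by
      refine (div_le_one erase_pos).mpr (eventWeight_mono G hlam (fun w hw => ?_) _)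
      rw [nonNeighbors, mem_filter] at hw
      exact mem_erase.mpr ⟨hw.2.1, hw.1⟩
    rw [marginal_eq_div_one_add G hlam hv]
    exact div_one_add_le_div_one_add (mul_nonneg hlam ratio_nonneg)
      (mul_le_of_le_one_right hlam ratio_le)
  · rw [marginal_of_notMem G hv]
    positivity

omit [DecidableEq V] in
lemma marginal_le_one (hlam : 0 ≤ lam) (W : Finset V) (v : V) : marginal G lam W v ≤ 1 :=
  (marginal_le G hlam W v).trans (div_le_one_of_le₀ (by linarith) (by linarith))

lemma marginal_eq_add (hlam : 0 ≤ lam) (hr : r ∈ W) (hvr : v ≠ r) :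
    marginal G lam W v = marginal G lam W r * marginal G lam (nonNeighbors G W r) v
      + (1 - marginal G lam W r) * marginal G lam (W.erase r) v := by
  have := partitionFn_pos G hlam W
  have := partitionFn_pos G hlam (nonNeighbors G W r)
  have := partitionFn_pos G hlam (W.erase r)
  rw [one_sub_marginal G hlam hr, marginal_self G hr]
  simp only [marginal]
  rw [eventWeight_mem_eq_add G hr hvr]
  field_simp

lemma marginal_nonNeighbors (hr : r ∈ W) (hvr : v ≠ r)
    (hpos : eventWeight G lam W (fun S => r ∈ S) ≠ 0) :
    marginal G lam (nonNeighbors G W r) v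
      = eventWeight G lam W (fun S => v ∈ S ∧ r ∈ S) / eventWeight G lam W (fun S => r ∈ S) := by
  rw [eventWeight_mem G hr] at hpos ⊢
  rw [eventWeight_and_mem G hr, mul_div_mul_left _ _ (left_ne_zero_of_mul hpos), marginal]
  simp only [mem_insert, hvr, false_or]

lemma marginal_erase (W : Finset V) (r v : V) :
    marginal G lam (W.erase r) v
      = eventWeight G lam W (fun S => v ∈ S ∧ r ∉ S) / eventWeight G lam W (fun S => r ∉ S) := by
  rw [marginal, partitionFn, ← eventWeight_and_notMem, ← eventWeight_and_notMem]
  simp only [true_and]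

end EventWeight

section Influence

variable {V : Type*} [Fintype V]

/-- The `ℓ¹` distance between the vectors of marginals of the hardcore models on the subgraphs
induced by `U` and by `W`. -/
def marginalDist (G : SimpleGraph V) (lam : ℝ) (U W : Finset V) : ℝ :=
  ∑ v, |marginal G lam U v - marginal G lam W v|

variable (G : SimpleGraph V) {lam : ℝ}

lemma marginalDist_self (U : Finset V) : marginalDist G lam U U = 0 := by simp [marginalDist]

lemma marginalDist_triangle (U W X : Finset V) :
    marginalDist G lam U X ≤ marginalDist G lam U W + marginalDist G lam W X := by
  simp only [marginalDist, ← sum_add_distrib]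
  exact sum_le_sum fun v _ => abs_sub_le _ _ _

variable [DecidableEq V] {N U W : Finset V} {r : V}

/-- The sum of the absolute influences of `r` on the other vertices, in the hardcore model on the
subgraph induced by `W`: conditioning `r` to be occupied leaves the model on the non-neighbours
of `r`, and conditioning it to be unoccupied the model on `W.erase r`. -/
def totalInfluence (G : SimpleGraph V) (lam : ℝ) (W : Finset V) (r : V) : ℝ :=
  marginalDist G lam (nonNeighbors G W r) (W.erase r)

lemma marginalDist_erase (hlam : 0 ≤ lam) (hr : r ∈ W) :
    marginalDist G lam (W.erase r) W = marginal G lam W r * (1 + totalInfluence G lam W r) := by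
  have abs_of_ne : ∀ v ∈ univ.erase r,
      |marginal G lam (W.erase r) v - marginal G lam W v| = marginal G lam W r
        * |marginal G lam (nonNeighbors G W r) v - marginal G lam (W.erase r) v| := fun v hv => by
    rw [marginal_eq_add G hlam hr (ne_of_mem_erase hv), abs_sub_comm,
      ← abs_of_nonneg (marginal_nonneg G hlam W r), ← abs_mul,
      abs_of_nonneg (marginal_nonneg G hlam W r)]
    ring_nf
  have notMem_nonNeighbors : r ∉ nonNeighbors G W r := by simp [nonNeighbors]
  rw [totalInfluence, marginalDist, marginalDist, ← add_sum_erase univ _ (mem_univ r),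
    ← add_sum_erase univ (fun v => |_ - marginal G lam (W.erase r) v|) (mem_univ r),
    sum_congr rfl abs_of_ne, ← mul_sum, marginal_of_notMem G (notMem_erase r W),
    marginal_of_notMem G notMem_nonNeighbors, zero_sub, abs_neg, sub_zero, abs_zero, zero_add,
    abs_of_nonneg (marginal_nonneg G hlam W r), mul_add, mul_one]

/- Delete the vertices of `N` one at a time; `X u` is what is left of `U` just before `u` goes. -/
lemma exists_deletion_chain (hlam : 0 ≤ lam) (hN : N ⊆ U) :
    ∃ X : V → Finset V, (∀ u ∈ N, u ∈ X u ∧ X u ⊆ U) ∧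
      partitionFn G lam (U \ N) / partitionFn G lam U = ∏ u ∈ N, (1 - marginal G lam (X u) u) ∧
      marginalDist G lam (U \ N) U
        ≤ ∑ u ∈ N, marginal G lam (X u) u * (1 + totalInfluence G lam (X u) u) := by
  induction N using Finset.induction_on with
  | empty =>
    exact ⟨fun _ => U, by simp, by simp [(partitionFn_pos G hlam U).ne'],
      by simp [marginalDist_self]⟩
  | insert w N hw ih =>
    obtain ⟨X, hX, hprod, hdist⟩ := ih ((subset_insert w N).trans hN)
    have w_mem : w ∈ U \ N := mem_sdiff.mpr ⟨hN (mem_insert_self w N), hw⟩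
    have update_of_mem : ∀ u ∈ N, Function.update X w (U \ N) u = X u := fun u hu =>
      Function.update_of_ne (ne_of_mem_of_not_mem hu hw) _ _
    refine ⟨Function.update X w (U \ N), ?_, ?_, ?_⟩
    · simp only [forall_mem_insert, Function.update_self]
      exact ⟨⟨w_mem, sdiff_subset⟩, fun u hu => by rw [update_of_mem u hu]; exact hX u hu⟩
    · rw [prod_insert hw, Function.update_self,
        prod_congr rfl fun u hu => by rw [update_of_mem u hu], ← hprod,
        one_sub_marginal G hlam w_mem, sdiff_insert,
        div_mul_div_cancel₀ (partitionFn_pos G hlam _).ne']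
    · rw [sum_insert hw, Function.update_self,
        sum_congr rfl fun u hu => by rw [update_of_mem u hu], ← marginalDist_erase G hlam w_mem,
        sdiff_insert]
      exact (marginalDist_triangle G _ (U \ N) U).trans (by gcongr)

/- The tree recursion; `X u` is the vertex set of the subproblem at the child `u` of `r`. -/
lemma exists_tree_recursion (hlam : 0 ≤ lam) (W : Finset V) (r : V) :
    ∃ X : V → Finset V, (∀ u ∈ W.filter (G.Adj r), u ∈ X u ∧ X u ⊆ W.erase r) ∧
      partitionFn G lam (nonNeighbors G W r) / partitionFn G lam (W.erase r)
        = ∏ u ∈ W.filter (G.Adj r), (1 - marginal G lam (X u) u) ∧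
      totalInfluence G lam W r ≤ ∑ u ∈ W.filter (G.Adj r),
        marginal G lam (X u) u * (1 + totalInfluence G lam (X u) u) := by
  have neighbors_subset : W.filter (G.Adj r) ⊆ W.erase r := fun v hv => by
    rw [mem_filter] at hv
    exact mem_erase.mpr ⟨hv.2.ne', hv.1⟩
  rw [totalInfluence, nonNeighbors_eq_sdiff]
  exact exists_deletion_chain G hlam neighbors_subset

variable {D : ℕ} {δ : ℝ}

lemma sqrt_marginal_mul_one_add_totalInfluence_le (hD : 2 ≤ D) (hδ : 0 < δ) (hlam : 0 ≤ lam)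
    (hle : lam ≤ (1 - δ) * lamC (D + 1)) (hdeg : ∀ v, (G.neighborSet v).ncard ≤ D + 1)
    (hr : r ∈ W) (hcard : #(W.filter (G.Adj r)) ≤ D) :
    √(marginal G lam W r) * (1 + totalInfluence G lam W r) ≤ 10 / δ * √(lam / (1 + lam)) := by
  induction hm : #W using Nat.strong_induction_on generalizing W r with
  | _ m ih =>
  obtain ⟨X, hX, hratio, hinf⟩ := exists_tree_recursion G hlam W r
  set N := W.filter (G.Adj r)
  set q := fun u => marginal G lam (X u) u
  set K := 10 / δ * √(lam / (1 + lam)) with hK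
  have child_le : ∀ u ∈ N, √(q u) * (1 + totalInfluence G lam (X u) u) ≤ K := fun u hu => by
    obtain ⟨hu_mem, hsub⟩ := hX u hu
    have r_notMem : r ∉ X u := fun h => notMem_erase r W (hsub h)
    refine ih _ ?_ hu_mem (card_filter_adj_le_of_adj_notMem G hdeg ?_ r_notMem) rfl
    · rw [← hm]
      exact card_lt_card (hsub.trans_ssubset (erase_ssubset hr))
    · exact (mem_filter.mp hu).2.symm
  have q_nonneg : ∀ u, 0 ≤ q u := fun u => marginal_nonneg G hlam _ _
  have contraction : √(marginal G lam W r) * ∑ u ∈ N, √(q u) ≤ 1 - δ / 10 := by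
    rw [marginal_eq_div_one_add G hlam hr, hratio]
    exact sqrt_mul_sum_sqrt_le hD hcard (fun u _ => q_nonneg u)
      (fun u _ => marginal_le_one G hlam _ _) hδ.le hlam hle
  calc √(marginal G lam W r) * (1 + totalInfluence G lam W r)
      ≤ √(marginal G lam W r) * (1 + ∑ u ∈ N, q u * (1 + totalInfluence G lam (X u) u)) := by
        gcongr
    _ ≤ √(marginal G lam W r) * (1 + ∑ u ∈ N, √(q u) * K) := by
        refine mul_le_mul_of_nonneg_left (add_le_add_right (sum_le_sum fun u hu => ?_) _)
          (Real.sqrt_nonneg _)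
        exact mul_le_sqrt_mul_of_sqrt_mul_le (q_nonneg u) (child_le u hu)
    _ = √(marginal G lam W r) + (√(marginal G lam W r) * ∑ u ∈ N, √(q u)) * K := by
        rw [← sum_mul]
        ring
    _ ≤ √(lam / (1 + lam)) + (1 - δ / 10) * K := by
        gcongr
        exact marginal_le G hlam W r
    _ = K := by
        rw [hK]
        field_simp
        ring

theorem totalInfluence_le (hD : 2 ≤ D) (hδ : 0 < δ) (hlam : 0 ≤ lam)
    (hle : lam ≤ (1 - δ) * lamC (D + 1)) (hdeg : ∀ v, (G.neighborSet v).ncard ≤ D + 1)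
    (W : Finset V) (r : V) : totalInfluence G lam W r ≤ 120 / δ := by
  obtain ⟨X, hX, -, hinf⟩ := exists_tree_recursion G hlam W r
  have term_le : ∀ u ∈ W.filter (G.Adj r),
      marginal G lam (X u) u * (1 + totalInfluence G lam (X u) u) ≤ 10 / δ * lam := fun u hu => by
    obtain ⟨hu_mem, hsub⟩ := hX u hu
    have card_le := card_filter_adj_le_of_adj_notMem G hdeg (mem_filter.mp hu).2.symm
      fun h => notMem_erase r W (hsub h)
    calc marginal G lam (X u) u * (1 + totalInfluence G lam (X u) u)
        ≤ √(marginal G lam (X u) u) * (10 / δ * √(lam / (1 + lam))) :=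
          mul_le_sqrt_mul_of_sqrt_mul_le (marginal_nonneg G hlam _ _)
            (sqrt_marginal_mul_one_add_totalInfluence_le G hD hδ hlam hle hdeg hu_mem card_le)
      _ ≤ √(lam / (1 + lam)) * (10 / δ * √(lam / (1 + lam))) := by
          gcongr
          exact marginal_le G hlam _ _
      _ = 10 / δ * (lam / (1 + lam)) := by
          rw [mul_left_comm, Real.mul_self_sqrt (by positivity)]
      _ ≤ 10 / δ * lam := by
          gcongr
          exact div_le_self hlam (by linarith)
  calc totalInfluence G lam W r ≤ #(W.filter (G.Adj r)) • (10 / δ * lam) :=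
        hinf.trans (sum_le_card_nsmul _ _ _ term_le)
    _ ≤ ((D + 1 : ℕ) : ℝ) * (10 / δ * lam) := by
        rw [nsmul_eq_mul]
        gcongr
        exact card_filter_adj_le G hdeg W r
    _ = 10 / δ * ((D + 1) * lam) := by push_cast; ring
    _ ≤ 10 / δ * 12 := by
        gcongr
        refine le_trans ?_ (add_one_mul_lamC_add_one_le hD)
        gcongr
        exact le_lamC_add_one hD hδ.le hle
    _ = 120 / δ := by ring

end Influence

section Spectral

variable {ι : Type*} [Fintype ι] {M : Matrix ι ι ℝ} {t : ℝ}

lemma IsRealEigenvalue.exists_le_sum_abs (h : IsRealEigenvalue M t) : ∃ i, t ≤ ∑ j, |M i j| := by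
  obtain ⟨v, hv, hMv⟩ := h
  have hasEigenvalue : Module.End.HasEigenvalue (Matrix.toLin' M) t :=
    Module.End.hasEigenvalue_of_hasEigenvector
      (Module.End.hasEigenvector_iff.mpr ⟨Module.End.mem_eigenspace_iff.mpr hMv, hv⟩)
  obtain ⟨i, hi⟩ := eigenvalue_mem_ball hasEigenvalue
  refine ⟨i, ?_⟩
  calc t ≤ M i i + ∑ j ∈ univ.erase i, |M i j| := (Real.closedBall_eq_Icc ▸ hi).2
    _ ≤ |M i i| + ∑ j ∈ univ.erase i, |M i j| := by gcongr; exact le_abs_self _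
    _ = ∑ j, |M i j| := add_sum_erase univ (fun j => |M i j|) (mem_univ i)

lemma SpectrallyIndependent.mono {μ : Finset (Fin n) → ℝ} {η η' : ℕ → ℝ}
    (h : SpectrallyIndependent μ η) (hη : ∀ k, η k ≤ η' k) : SpectrallyIndependent μ η' :=
  fun A B hAB hfeas hcard t ht => (h A B hAB hfeas hcard t ht).trans (hη _)

end Spectral

section Pinning

lemma prE_pin (μ : Finset (Fin n) → ℝ) (A B : Finset (Fin n)) (E : Finset (Fin n) → Prop) :
    prE (pin μ A B) E = prE μ (fun S => (A ⊆ S ∧ Disjoint B S) ∧ E S)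
      / prE μ (fun S => A ⊆ S ∧ Disjoint B S) := by
  rw [prE, prE, sum_div]
  refine sum_congr rfl fun S _ => ?_
  by_cases hS : A ⊆ S ∧ Disjoint B S <;> by_cases hE : E S <;> simp [pin, hS, hE]

variable {G : SimpleGraph (Fin n)} {lam : ℝ} {A B : Finset (Fin n)} {i j : Fin n}

lemma isIndepSet_iff {S : Finset (Fin n)} :
    IsIndepSet G S ↔ G.IsIndepSet (S : Set (Fin n)) :=
  ⟨fun h _ ha _ hb _ => h _ ha _ hb, fun h _ ha _ hb hab => h ha hb hab.ne hab⟩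

lemma sum_ite_isIndepSet_and (E : Finset (Fin n) → Prop) :
    ∑ S, (if IsIndepSet G S ∧ E S then lam ^ #S else 0) = eventWeight G lam univ E := by
  rw [eventWeight, powerset_univ, sum_filter]
  refine sum_congr rfl fun S _ => ?_
  simp only [isIndepSet_iff]
  congr!

lemma hardcoreZ_eq_partitionFn : hardcoreZ G lam = partitionFn G lam univ := by
  simp only [hardcoreZ, partitionFn, ← sum_ite_isIndepSet_and, and_true]

lemma prE_hardcore (E : Finset (Fin n) → Prop) :
    prE (hardcore G lam) E = eventWeight G lam univ E / partitionFn G lam univ := by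
  rw [← sum_ite_isIndepSet_and, sum_div, prE]
  refine sum_congr rfl fun S _ => ?_
  by_cases hS : IsIndepSet G S <;> by_cases hE : E S <;>
    simp [hardcore, hardcoreZ_eq_partitionFn, hS, hE]

lemma Feasible.isIndepSet (h : Feasible (hardcore G lam) A B) :
    G.IsIndepSet (A : Set (Fin n)) := by
  obtain ⟨S, -, hS⟩ := exists_ne_zero_of_sum_ne_zero (ne_of_gt h)
  simp only [hardcore, ne_eq, ite_eq_right_iff, Classical.not_imp] at hS
  exact (isIndepSet_iff.mp hS.2.1).mono hS.1.1

lemma prE_pin_hardcore (hlam : 0 ≤ lam) (hAB : Disjoint A B)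
    (hfeas : Feasible (hardcore G lam) A B) (E : Finset (Fin n) → Prop) :
    prE (pin (hardcore G lam) A B) E
      = eventWeight G lam (freeVertices G univ A B) (fun T => E (A ∪ T))
        / partitionFn G lam (freeVertices G univ A B) := by
  have pinned := eventWeight_pinned G (lam := lam) hfeas.isIndepSet (subset_univ A) hAB
  have pinned_true : eventWeight G lam univ (fun S => A ⊆ S ∧ Disjoint B S)
      = lam ^ #A * partitionFn G lam (freeVertices G univ A B) := by
    simpa only [and_true, partitionFn] using pinned fun _ => True
  have pow_ne_zero : lam ^ #A ≠ 0 := fun h => by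
    rw [Feasible, prE_hardcore, pinned_true, h, zero_mul, zero_div] at hfeas
    exact hfeas.false
  rw [prE_pin, prE_hardcore, prE_hardcore, pinned, pinned_true,
    div_div_div_cancel_right₀ (partitionFn_pos G hlam _).ne', mul_div_mul_left _ _ pow_ne_zero]

lemma condPrE_pin_hardcore (hlam : 0 ≤ lam) (hAB : Disjoint A B)
    (hfeas : Feasible (hardcore G lam) A B) (E F : Finset (Fin n) → Prop) :
    condPrE (pin (hardcore G lam) A B) E F
      = eventWeight G lam (freeVertices G univ A B) (fun T => E (A ∪ T) ∧ F (A ∪ T))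
        / eventWeight G lam (freeVertices G univ A B) (fun T => F (A ∪ T)) := by
  rw [condPrE, prE_pin_hardcore hlam hAB hfeas, prE_pin_hardcore hlam hAB hfeas,
    div_div_div_cancel_right₀ (partitionFn_pos G hlam _).ne']

lemma abs_pinnedPsi_hardcore_le (hlam : 0 ≤ lam) (hAB : Disjoint A B)
    (hfeas : Feasible (hardcore G lam) A B) (i j : Fin n) :
    |pinnedPsi (hardcore G lam) A B i j|
      ≤ |marginal G lam (nonNeighbors G (freeVertices G univ A B) i) j
        - marginal G lam ((freeVertices G univ A B).erase i) j| := by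
  rw [pinnedPsi]
  split_ifs with h
  swap; · simp
  obtain ⟨hij, hi, hj, hpos, -⟩ := h
  have hiA : i ∉ A := fun h => hi (mem_union_left _ h)
  have hjA : j ∉ A := fun h => hj (mem_union_left _ h)
  rw [prE_pin_hardcore hlam hAB hfeas] at hpos
  rw [condPrE_pin_hardcore hlam hAB hfeas, condPrE_pin_hardcore hlam hAB hfeas]
  simp only [mem_union, hiA, hjA, false_or] at hpos ⊢
  set W := freeVertices G univ A B
  have weight_ne_zero : eventWeight G lam W (fun S => i ∈ S) ≠ 0 := fun h => by
    simp only [h, zero_div, lt_irrefl] at hpos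
  have hiW : i ∈ W := by
    by_contra h
    exact weight_ne_zero (eventWeight_mem_of_notMem G h)
  rw [marginal_nonNeighbors G hiW hij.symm weight_ne_zero, marginal_erase]

lemma sum_abs_pinnedPsi_hardcore_le_totalInfluence (hlam : 0 ≤ lam) (hAB : Disjoint A B)
    (hfeas : Feasible (hardcore G lam) A B) (i : Fin n) :
    ∑ j, |pinnedPsi (hardcore G lam) A B i j|
      ≤ totalInfluence G lam (freeVertices G univ A B) i :=
  sum_le_sum fun j _ => abs_pinnedPsi_hardcore_le hlam hAB hfeas i j

lemma abs_pinnedPsi_hardcore_le_div (hlam : 0 ≤ lam) (hAB : Disjoint A B)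
    (hfeas : Feasible (hardcore G lam) A B) (i j : Fin n) :
    |pinnedPsi (hardcore G lam) A B i j| ≤ lam / (1 + lam) :=
  (abs_pinnedPsi_hardcore_le hlam hAB hfeas i j).trans <|
    abs_sub_le_of_nonneg_of_le (marginal_nonneg G hlam _ _) (marginal_le G hlam _ _)
      (marginal_nonneg G hlam _ _) (marginal_le G hlam _ _)

lemma sum_abs_pinnedPsi_hardcore_le_div_mul (hlam : 0 ≤ lam) (hAB : Disjoint A B)
    (hfeas : Feasible (hardcore G lam) A B) (hcard : #A + #B < n) (i : Fin n) :
    ∑ j, |pinnedPsi (hardcore G lam) A B i j|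
      ≤ lam / (1 + lam) * ((n : ℝ) - (#A + #B : ℕ) - 1) := by
  have card_nonneg : 0 ≤ (n : ℝ) - (#A + #B : ℕ) - 1 := by
    have : ((#A + #B : ℕ) : ℝ) + 1 ≤ n := by exact_mod_cast hcard
    linarith
  by_cases hi : i ∈ A ∪ B
  · simp only [pinnedPsi, hi, not_true_eq_false, false_and, and_false, if_false, abs_zero,
      sum_const_zero]
    positivity
  have eq_zero : ∀ j, j ∉ (insert i (A ∪ B))ᶜ → |pinnedPsi (hardcore G lam) A B i j| = 0 := by
    intro j hj
    rw [mem_compl, not_not, mem_insert] at hj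
    rw [abs_eq_zero, pinnedPsi, if_neg]
    rintro ⟨hij, -, hjAB, -⟩
    exact hj.elim (fun h => hij h.symm) hjAB
  have card_compl : (#(insert i (A ∪ B))ᶜ : ℝ) = (n : ℝ) - (#A + #B : ℕ) - 1 := by
    rw [card_compl, Fintype.card_fin, card_insert_of_notMem hi, card_union_of_disjoint hAB,
      Nat.cast_sub hcard]
    push_cast
    ring
  calc ∑ j, |pinnedPsi (hardcore G lam) A B i j|
      = ∑ j ∈ (insert i (A ∪ B))ᶜ, |pinnedPsi (hardcore G lam) A B i j| :=
        (sum_subset (subset_univ _) fun j _ => eq_zero j).symm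
    _ ≤ #(insert i (A ∪ B))ᶜ • (lam / (1 + lam)) :=
        sum_le_card_nsmul _ _ _ fun j _ => abs_pinnedPsi_hardcore_le_div hlam hAB hfeas i j
    _ = lam / (1 + lam) * ((n : ℝ) - (#A + #B : ℕ) - 1) := by
        rw [nsmul_eq_mul, card_compl, mul_comm]

end Pinning

theorem statement2_general {Δ : ℕ} (hΔ : 3 ≤ Δ) {δ lam : ℝ} (hδ : 0 < δ) (hlam : 0 ≤ lam)
    (hle : lam ≤ (1 - δ) * lamC Δ) {n : ℕ} (G : SimpleGraph (Fin n))
    (hdeg : ∀ v, (G.neighborSet v).ncard ≤ Δ) :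
    SpectrallyIndependent (hardcore G lam)
      (fun k => min (120 / δ) (lam / (1 + lam) * ((n : ℝ) - k - 1))) := by
  intro A B hAB hfeas hcard t ht
  obtain ⟨D, rfl⟩ : ∃ D, Δ = D + 1 := ⟨Δ - 1, by omega⟩
  obtain ⟨i, hi⟩ := ht.exists_le_sum_abs
  refine le_min (hi.trans ?_) (hi.trans ?_)
  · exact (sum_abs_pinnedPsi_hardcore_le_totalInfluence hlam hAB hfeas i).trans
      (totalInfluence_le G (by omega) hδ hlam hle hdeg _ i)
  · exact sum_abs_pinnedPsi_hardcore_le_div_mul hlam hAB hfeas (by have := i.pos; omega) i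

/-- The hardcore distribution at `λ = (1-δ)·λ_c(Δ)` on a graph of
maximum degree at most `Δ` is spectrally independent with
`η k = min (exp (c/δ)) ((λ/(1+λ))·(n-k-1))`. -/
theorem statement2 :
    ∃ c : ℝ, 1 ≤ c ∧
      ∀ (Δ : ℕ), 3 ≤ Δ → ∀ δ : ℝ, 0 < δ → δ < 1 →
      ∀ (n : ℕ), 2 ≤ n → ∀ G : SimpleGraph (Fin n),
      (∀ v : Fin n, (G.neighborSet v).ncard ≤ Δ) →
      SpectrallyIndependent (hardcore G ((1 - δ) * lamC Δ))
        (fun k => min (Real.exp (c / δ))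
          ((1 - δ) * lamC Δ / (1 + (1 - δ) * lamC Δ) * ((n : ℝ) - k - 1))) := by
  refine ⟨120, by norm_num, fun Δ hΔ δ hδ hδ1 n _ G hdeg => ?_⟩
  have hlam : 0 ≤ (1 - δ) * lamC Δ := mul_nonneg (by linarith) (lamC_pos hΔ |>.le)
  exact (statement2_general hΔ hδ hlam le_rfl G hdeg).mono fun k =>
    min_le_min_right _ (by linarith [Real.add_one_le_exp (120 / δ)])

end PaperStmt
end
end

section
/- All eigenvalues of the pairwise influence matrix Ψ_μ are real: every complex eigenvalue z of Ψ_μ (i.e. every z in the spectrum of Ψ_μ viewed as a matrix over ℂ via the embedding ℝ → ℂ) satisfies Im z = 0. -/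
/-!
Multiplying the `i`-th row of the influence matrix by `Pr[i ∈ S] Pr[i ∉ S]` turns it into the
off-diagonal part of the covariance matrix of the indicators of `i ∈ S`, which is symmetric. The
influence matrix is therefore self-adjoint for the inner product with these weights.
-/

open scoped Classical
open Finset

noncomputable section

namespace PaperStmt

variable {n : ℕ}

/-- The pairwise influence matrix `Ψ_μ`. -/
def psi (μ : Finset (Fin n) → ℝ) : Matrix (Fin n) (Fin n) ℝ :=
  fun i j => if i = j then 0 else
    condPrE μ (fun S => j ∈ S) (fun S => i ∈ S)
      - condPrE μ (fun S => j ∈ S) (fun S => i ∉ S)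

section Spectrum

open Matrix
open scoped ComplexOrder

theorem im_eq_zero_of_mem_spectrum_of_posDef_of_isHermitian_mul {𝕜 ι : Type*} [RCLike 𝕜]
    [Fintype ι] [DecidableEq ι] {D A : Matrix ι ι 𝕜} (hD : D.PosDef) (hDA : (D * A).IsHermitian)
    {z : 𝕜} (hz : z ∈ spectrum 𝕜 A) : RCLike.im z = 0 := by
  rw [← spectrum_toLin', ← Module.End.hasEigenvalue_iff_mem_spectrum] at hz
  obtain ⟨v, hv⟩ := hz.exists_hasEigenvector
  have hAv : A *ᵥ v = z • v := hv.apply_eq_smul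
  have hform : star v ⬝ᵥ (D * A) *ᵥ v = z * (star v ⬝ᵥ D *ᵥ v) := by
    rw [← mulVec_mulVec, hAv, mulVec_smul, dotProduct_smul, smul_eq_mul]
  obtain ⟨hre, him⟩ := RCLike.pos_iff.mp (hD.dotProduct_mulVec_pos hv.2)
  have hreal := hDA.im_star_dotProduct_mulVec_self v
  rw [hform, RCLike.mul_im, him, mul_zero, zero_add] at hreal
  exact (mul_eq_zero.mp hreal).resolve_right hre.ne'

end Spectrum

theorem prE_and_add_prE_and_not (μ : Finset (Fin n) → ℝ) (E F : Finset (Fin n) → Prop) :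
    prE μ (fun S => E S ∧ F S) + prE μ (fun S => E S ∧ ¬F S) = prE μ E := by
  simp only [prE, ← sum_add_distrib]
  refine sum_congr rfl fun S _ => ?_
  by_cases hE : E S <;> by_cases hF : F S <;> simp [hE, hF]

theorem prE_add_prE_not (μ : Finset (Fin n) → ℝ) (F : Finset (Fin n) → Prop) :
    prE μ F + prE μ (fun S => ¬F S) = ∑ S, μ S := by
  calc
    _ = prE μ (fun _ => True) := by
      simpa only [true_and] using prE_and_add_prE_and_not μ (fun _ => True) F
    _ = ∑ S, μ S := by simp only [prE, if_true]

/-- The covariance of the indicators of two events under `μ`. The factor `∑ S, μ S`, equal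
to `1` for a probability distribution, makes it homogeneous of degree two in `μ`. -/
def covE (μ : Finset (Fin n) → ℝ) (E F : Finset (Fin n) → Prop) : ℝ :=
  (∑ S, μ S) * prE μ (fun S => E S ∧ F S) - prE μ E * prE μ F

theorem covE_comm (μ : Finset (Fin n) → ℝ) (E F : Finset (Fin n) → Prop) :
    covE μ E F = covE μ F E := by
  simp only [covE, and_comm, mul_comm (prE μ E)]

theorem prE_mul_prE_not_mul_condPrE_sub_condPrE_not {μ : Finset (Fin n) → ℝ}
    (E : Finset (Fin n) → Prop) {F : Finset (Fin n) → Prop} (hF : prE μ F ≠ 0)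
    (hF' : prE μ (fun S => ¬F S) ≠ 0) :
    prE μ F * prE μ (fun S => ¬F S) * (condPrE μ E F - condPrE μ E (fun S => ¬F S)) =
      covE μ E F := by
  rw [covE, condPrE, condPrE, ← prE_add_prE_not μ F, ← prE_and_add_prE_and_not μ E F]
  field_simp
  ring

theorem isHermitian_diagonal_mul_psi {μ : Finset (Fin n) → ℝ}
    (h : ∀ i, prE μ (fun S => i ∈ S) * prE μ (fun S => i ∉ S) ≠ 0) :
    (Matrix.diagonal (fun i => prE μ (fun S => i ∈ S) * prE μ (fun S => i ∉ S)) *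
      psi μ).IsHermitian := by
  have hcov (i j : Fin n) (hij : i ≠ j) :
      prE μ (fun S => i ∈ S) * prE μ (fun S => i ∉ S) * psi μ i j =
        covE μ (fun S => j ∈ S) (fun S => i ∈ S) := by
    rw [psi, if_neg hij]
    exact prE_mul_prE_not_mul_condPrE_sub_condPrE_not _ (left_ne_zero_of_mul (h i))
      (right_ne_zero_of_mul (h i))
  refine Matrix.IsHermitian.ext fun i j => ?_
  rw [Matrix.diagonal_mul, Matrix.diagonal_mul, star_trivial]
  rcases eq_or_ne i j with rfl | hij
  · rfl
  · rw [hcov i j hij, hcov j i hij.symm, covE_comm]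

open scoped ComplexOrder in
theorem statement4_general {μ : Finset (Fin n) → ℝ}
    (h : ∀ i : Fin n, 0 < prE μ (fun S => i ∈ S) * prE μ (fun S => i ∉ S))
    {z : ℂ} (hz : z ∈ spectrum ℂ ((psi μ).map (Complex.ofReal : ℝ → ℂ))) :
    z.im = 0 := by
  have hD : (Matrix.diagonal fun i =>
      ((prE μ (fun S => i ∈ S) * prE μ (fun S => i ∉ S) : ℝ) : ℂ)).PosDef :=
    Matrix.posDef_diagonal_iff.mpr fun i => Complex.zero_lt_real.mpr (h i)
  have hDA := (isHermitian_diagonal_mul_psi fun i => (h i).ne').map Complex.ofRealHom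
    fun x => (Complex.conj_ofReal x).symm
  rw [Matrix.map_mul, Matrix.diagonal_map (map_zero _)] at hDA
  exact im_eq_zero_of_mem_spectrum_of_posDef_of_isHermitian_mul hD hDA hz

/-- All eigenvalues of the pairwise influence matrix `Ψ_μ` are
real: every complex element of the spectrum of `Ψ_μ` (viewed as a complex matrix
via `ℝ → ℂ`) has zero imaginary part. -/
theorem statement4 (n : ℕ) (hn : 2 ≤ n) (μ : Finset (Fin n) → ℝ)
    (hpos : ∀ S, 0 ≤ μ S) (hsum : ∑ S : Finset (Fin n), μ S = 1)
    (hmarg : ∀ i : Fin n, 0 < prE μ (fun S => i ∈ S)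
      ∧ prE μ (fun S => i ∈ S) < 1)
    (z : ℂ) (hz : z ∈ spectrum ℂ ((psi μ).map (Complex.ofReal : ℝ → ℂ))) :
    z.im = 0 := by
  refine statement4_general (fun i => mul_pos (hmarg i).1 ?_) hz
  linarith [hmarg i, prE_add_prE_not μ fun S => i ∈ S]

end PaperStmt
end
end

section
/- Define the 2n×2n real matrix M_∅ indexed by pairs (i,s) ∈ [n]×{in,out} by M_∅((i,s),(j,t)) = (1/(n−1))·(Pr[j has state t | i has state s] − Pr[j has state t]) for i ≠ j, and M_∅((i,s),(i,t)) = 0. Then charpoly(P_∅)·X^n = charpoly(M_∅)·(X − 1)·(X + 1/(n−1))^{n−1} in ℝ[X]; in particular P_∅ has 1 as an eigenvalue, has −1/(n−1) as an eigenvalue of algebraic multiplicity at least n−1, and the spectrum of M_∅ is obtained from that of P_∅ by replacing these n trivial eigenvalues with n copies of 0. -/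
open scoped Classical
open Finset Polynomial

noncomputable section

namespace PaperStmt

variable {n : ℕ}

/-- The skeleton walk matrix `P_∅`, indexed by pairs `(i, s) ∈ [n] × {in, out}`. -/
def skeletonWalk (μ : Finset (Fin n) → ℝ) :
    Matrix (Fin n × Bool) (Fin n × Bool) ℝ :=
  fun p q => if p.1 = q.1 then 0 else
    (1 / ((n : ℝ) - 1)) * condPrE μ (stateEvent q.1 q.2) (stateEvent p.1 p.2)

/-- The centered walk matrix `M_∅`. -/
def centeredWalk (μ : Finset (Fin n) → ℝ) :
    Matrix (Fin n × Bool) (Fin n × Bool) ℝ :=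
  fun p q => if p.1 = q.1 then 0 else
    (1 / ((n : ℝ) - 1)) *
      (condPrE μ (stateEvent q.1 q.2) (stateEvent p.1 p.2)
        - prE μ (stateEvent q.1 q.2))

/-!
Let `A` lift functions of the coordinate `i` to functions of the state `(i, s)`, let `B` average
a function of states against the marginals of each coordinate, and let `W` be the simple random
walk on the complete graph. Then `P_∅ = M_∅ + A W B`, where `B A = 1`. Each row of conditional
probabilities and each marginal sums to one, so their differences cancel: `M_∅ A = 0`.
Consequently `P_∅` acts as `W` on the range of `A`, and on the quotient by that range it agrees
with `M_∅`, which vanishes on the range; so the spectrum of `P_∅` is that of `M_∅` with `n` zeros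
replaced by the spectrum of `W`.
-/

section Deflation

variable {ι κ R : Type*} [Fintype ι] [DecidableEq ι] [Fintype κ] [DecidableEq κ] [CommRing R]

theorem charmatrix_mul_charmatrix_of_mul_eq_zero {M N : Matrix ι ι R} (h : M * N = 0) :
    M.charmatrix * N.charmatrix = (X : R[X]) • (M + N).charmatrix := by
  have hC : M.map C * N.map C = 0 := by
    rw [← Matrix.map_mul, h, Matrix.map_zero _ C_0]
  have hadd : (M + N).map C = M.map C + N.map C := Matrix.map_add _ (fun _ _ => C_add) M N
  simp only [Matrix.charmatrix, RingHom.mapMatrix_apply, Matrix.scalar_apply,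
    ← Matrix.smul_one_eq_diagonal, hadd, sub_mul, mul_sub, hC, smul_mul_assoc, mul_smul_comm,
    one_mul, mul_one, smul_sub, smul_add]
  abel

theorem charpoly_mul_charpoly_of_mul_eq_zero {M N : Matrix ι ι R} (h : M * N = 0) :
    M.charpoly * N.charpoly = X ^ Fintype.card ι * (M + N).charpoly := by
  simp only [Matrix.charpoly, ← Matrix.det_mul, ← Matrix.det_smul,
    charmatrix_mul_charmatrix_of_mul_eq_zero h]

theorem charpoly_add_mul_of_mul_eq_zero {M : Matrix ι ι R} {A : Matrix ι κ R}
    (B : Matrix κ ι R) (hMA : M * A = 0) :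
    (M + A * B).charpoly * X ^ Fintype.card κ = M.charpoly * (B * A).charpoly := by
  have hsum : M.charpoly * (A * B).charpoly = X ^ Fintype.card ι * (M + A * B).charpoly :=
    charpoly_mul_charpoly_of_mul_eq_zero (by rw [← Matrix.mul_assoc, hMA, Matrix.zero_mul])
  have hswap := Matrix.charpoly_mul_comm' A B
  refine (monic_X_pow (R := R) (Fintype.card ι)).isRegular.left ?_
  linear_combination (-X ^ Fintype.card κ) * hsum + M.charpoly * hswap

end Deflation

theorem IsRealEigenvalue.add_mul {ι κ : Type*} [Fintype ι] [Fintype κ] {M : Matrix ι ι ℝ}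
    {A : Matrix ι κ ℝ} {B : Matrix κ ι ℝ} {t : ℝ} (hBA : IsRealEigenvalue (B * A) t)
    (ht : t ≠ 0) (hMA : M * A = 0) : IsRealEigenvalue (M + A * B) t := by
  obtain ⟨v, hv, hBAv⟩ := hBA
  refine ⟨A.mulVec v, fun hAv => smul_ne_zero ht hv ?_, ?_⟩
  · rw [← hBAv, ← Matrix.mulVec_mulVec, hAv, Matrix.mulVec_zero]
  · have hintertwine : (M + A * B) * A = A * (B * A) := by
      rw [Matrix.add_mul, hMA, zero_add, Matrix.mul_assoc]
    rw [Matrix.mulVec_mulVec, hintertwine, ← Matrix.mulVec_mulVec, hBAv, Matrix.mulVec_smul]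

theorem isCoprime_X_add_C_X {R : Type*} [CommRing R] {c : R} (hc : IsUnit c) :
    IsCoprime (X + C c) (X : R[X]) := by
  simpa using isCoprime_X_sub_C_of_isUnit_sub (a := -c) (b := 0) (by simpa using hc)

theorem charpoly_offDiag_const {ι R : Type*} [Fintype ι] [DecidableEq ι] [Nonempty ι]
    [CommRing R] (c : R) :
    (Matrix.of fun i j : ι => if i = j then 0 else c).charpoly
      = (X + C c - C (Fintype.card ι * c)) * (X + C c) ^ (Fintype.card ι - 1) := by
  have hrankOne : (Matrix.of fun i j : ι => if i = j then 0 else c)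
      = Matrix.vecMulVec (fun _ => c) (fun _ => 1) - Matrix.scalar ι c := by
    ext i j
    by_cases hij : i = j <;> simp [Matrix.vecMulVec_apply, hij]
  obtain ⟨m, hm⟩ : ∃ m, Fintype.card ι = m + 1 :=
    Nat.exists_eq_succ_of_ne_zero Fintype.card_ne_zero
  rw [hrankOne, Matrix.charpoly_sub_scalar, Matrix.charpoly_vecMulVec]
  simp only [dotProduct, mul_one, sum_const, card_univ, nsmul_eq_mul, sub_comp, mul_comp,
    C_comp, X_pow_comp, hm, Nat.add_sub_cancel, smul_eq_C_mul]
  ring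

/-- The transition matrix of the simple random walk on the complete graph on `Fin n`: the walk
that `skeletonWalk` induces on coordinates when the states are forgotten. -/
def completeWalk (n : ℕ) : Matrix (Fin n) (Fin n) ℝ :=
  Matrix.of fun i j => if i = j then 0 else 1 / ((n : ℝ) - 1)

theorem charpoly_completeWalk (hn : 2 ≤ n) :
    (completeWalk n).charpoly = (X - 1) * (X + C (1 / ((n : ℝ) - 1))) ^ (n - 1) := by
  have : Nonempty (Fin n) := ⟨⟨0, by lia⟩⟩
  have hn1 : (n : ℝ) - 1 ≠ 0 := (sub_pos.2 (Nat.one_lt_cast.2 hn)).ne'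
  have hc : (n : ℝ) * (1 / ((n : ℝ) - 1)) = 1 / ((n : ℝ) - 1) + 1 := by
    field_simp
    ring
  rw [completeWalk, charpoly_offDiag_const, Fintype.card_fin, hc, C_add, C_1]
  ring

theorem completeWalk_mulVec_one (hn : 2 ≤ n) : (completeWalk n).mulVec 1 = 1 := by
  have hn1 : (n : ℝ) - 1 ≠ 0 := (sub_pos.2 (Nat.one_lt_cast.2 hn)).ne'
  ext i
  have hrow (j : Fin n) : completeWalk n i j
      = 1 / ((n : ℝ) - 1) - if i = j then 1 / ((n : ℝ) - 1) else 0 := by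
    rw [completeWalk, Matrix.of_apply]
    split_ifs <;> ring
  simp only [Matrix.mulVec, dotProduct, Pi.one_apply, mul_one, hrow, sum_sub_distrib, sum_const,
    card_univ, Fintype.card_fin, nsmul_eq_mul, sum_ite_eq, mem_univ, if_true]
  field_simp

theorem isRealEigenvalue_completeWalk_one (hn : 2 ≤ n) : IsRealEigenvalue (completeWalk n) 1 := by
  have : Nonempty (Fin n) := ⟨⟨0, by lia⟩⟩
  exact ⟨1, one_ne_zero, by rw [completeWalk_mulVec_one hn, one_smul]⟩

section Marginals

variable {μ : Finset (Fin n) → ℝ}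

theorem sum_prE_stateEvent_and (j : Fin n) (F : Finset (Fin n) → Prop) :
    ∑ t, prE μ (fun S => stateEvent j t S ∧ F S) = prE μ F := by
  simp only [prE, stateEvent, Fintype.sum_bool, ← sum_add_distrib]
  refine sum_congr rfl fun S _ => ?_
  by_cases hj : j ∈ S <;> by_cases hF : F S <;> simp [hj, hF]

theorem sum_condPrE_stateEvent (j : Fin n) {F : Finset (Fin n) → Prop} (hF : prE μ F ≠ 0) :
    ∑ t, condPrE μ (stateEvent j t) F = 1 := by
  simp only [condPrE, ← sum_div, sum_prE_stateEvent_and, div_self hF]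

theorem sum_prE_stateEvent (hsum : ∑ S, μ S = 1) (j : Fin n) :
    ∑ t, prE μ (stateEvent j t) = 1 := by
  simpa [prE, hsum] using sum_prE_stateEvent_and (μ := μ) j fun _ => True

theorem prE_stateEvent_pos (hsum : ∑ S, μ S = 1) {i : Fin n}
    (hmarg : 0 < prE μ (fun S => i ∈ S) ∧ prE μ (fun S => i ∈ S) < 1) (s : Bool) :
    0 < prE μ (stateEvent i s) := by
  have hin : prE μ (stateEvent i true) = prE μ (fun S => i ∈ S) :=
    congrArg (prE μ) (by ext S; simp [stateEvent])
  have hadd := sum_prE_stateEvent hsum i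
  rw [Fintype.sum_bool] at hadd
  cases s <;> linarith [hmarg.1, hmarg.2]

end Marginals

section SkeletonWalk

variable {μ : Finset (Fin n) → ℝ}

/-- The matrix lifting functions of the coordinate to functions of pairs (coordinate, state):
the operator `A` with `(A f) (i, s) = f i`. -/
def coordMatrix (n : ℕ) : Matrix (Fin n × Bool) (Fin n) ℝ :=
  (1 : Matrix (Fin n) (Fin n) ℝ).submatrix Prod.fst id

/-- The matrix whose `k`-th row is the marginal distribution of the state of `k`, supported on
the pairs `(k, s)`: the operator `B` averaging a function of pairs over each coordinate. -/
def marginalMatrix (μ : Finset (Fin n) → ℝ) : Matrix (Fin n) (Fin n × Bool) ℝ :=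
  Matrix.of fun k q => if k = q.1 then prE μ (stateEvent q.1 q.2) else 0

theorem coordMatrix_mul_apply {κ : Type*} (N : Matrix (Fin n) κ ℝ) (p : Fin n × Bool) (k : κ) :
    (coordMatrix n * N) p k = N p.1 k := by
  simp [coordMatrix, Matrix.mul_apply, Matrix.one_apply]

theorem mul_coordMatrix_apply {κ : Type*} (N : Matrix κ (Fin n × Bool) ℝ) (k : κ) (j : Fin n) :
    (N * coordMatrix n) k j = ∑ t, N k (j, t) := by
  simp [coordMatrix, Matrix.mul_apply, Matrix.one_apply, Fintype.sum_prod_type_right]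

theorem mul_marginalMatrix_apply {κ : Type*} (N : Matrix κ (Fin n) ℝ) (k : κ)
    (q : Fin n × Bool) :
    (N * marginalMatrix μ) k q = N k q.1 * prE μ (stateEvent q.1 q.2) := by
  simp [marginalMatrix, Matrix.mul_apply]

theorem marginalMatrix_mul_coordMatrix (hsum : ∑ S, μ S = 1) :
    marginalMatrix μ * coordMatrix n = 1 := by
  ext k j
  rw [mul_coordMatrix_apply, Matrix.one_apply]
  split_ifs with hkj <;> simp only [marginalMatrix, Matrix.of_apply, hkj, if_true, if_false,
    sum_prE_stateEvent hsum, sum_const_zero]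

theorem centeredWalk_mul_coordMatrix (hsum : ∑ S, μ S = 1)
    (hne : ∀ i s, prE μ (stateEvent i s) ≠ 0) : centeredWalk μ * coordMatrix n = 0 := by
  ext p j
  rw [mul_coordMatrix_apply, Matrix.zero_apply]
  by_cases hpj : p.1 = j
  · simp only [centeredWalk, hpj, if_true, sum_const_zero]
  · simp only [centeredWalk, hpj, if_false, ← mul_sum, sum_sub_distrib,
      sum_condPrE_stateEvent j (hne p.1 p.2), sum_prE_stateEvent hsum, sub_self, mul_zero]

theorem completeWalk_mul_marginalMatrix_mul_coordMatrix (hsum : ∑ S, μ S = 1) :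
    completeWalk n * marginalMatrix μ * coordMatrix n = completeWalk n := by
  rw [Matrix.mul_assoc, marginalMatrix_mul_coordMatrix hsum, Matrix.mul_one]

theorem skeletonWalk_eq_centeredWalk_add (μ : Finset (Fin n) → ℝ) :
    skeletonWalk μ = centeredWalk μ + coordMatrix n * (completeWalk n * marginalMatrix μ) := by
  ext p q
  rw [Matrix.add_apply, coordMatrix_mul_apply, mul_marginalMatrix_apply]
  simp only [skeletonWalk, centeredWalk, completeWalk, Matrix.of_apply]
  split_ifs <;> ring

theorem charpoly_skeletonWalk_mul_X_pow (hn : 2 ≤ n) (hsum : ∑ S, μ S = 1)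
    (hne : ∀ i s, prE μ (stateEvent i s) ≠ 0) :
    (skeletonWalk μ).charpoly * X ^ n
      = (centeredWalk μ).charpoly * (X - 1) * (X + C (1 / ((n : ℝ) - 1))) ^ (n - 1) := by
  have hdeflate := charpoly_add_mul_of_mul_eq_zero (completeWalk n * marginalMatrix μ)
    (centeredWalk_mul_coordMatrix hsum hne)
  rwa [← skeletonWalk_eq_centeredWalk_add, completeWalk_mul_marginalMatrix_mul_coordMatrix hsum,
    Fintype.card_fin, charpoly_completeWalk hn, ← mul_assoc] at hdeflate

theorem isRealEigenvalue_skeletonWalk_one (hn : 2 ≤ n) (hsum : ∑ S, μ S = 1)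
    (hne : ∀ i s, prE μ (stateEvent i s) ≠ 0) : IsRealEigenvalue (skeletonWalk μ) 1 := by
  have hwalk := isRealEigenvalue_completeWalk_one hn
  rw [← completeWalk_mul_marginalMatrix_mul_coordMatrix hsum] at hwalk
  rw [skeletonWalk_eq_centeredWalk_add]
  exact hwalk.add_mul one_ne_zero (centeredWalk_mul_coordMatrix hsum hne)

end SkeletonWalk

theorem statement7_general (n : ℕ) (hn : 2 ≤ n) (μ : Finset (Fin n) → ℝ)
    (hsum : ∑ S : Finset (Fin n), μ S = 1) (hne : ∀ i s, prE μ (stateEvent i s) ≠ 0) :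
    (skeletonWalk μ).charpoly * X ^ n
      = (centeredWalk μ).charpoly * (X - 1) * (X + C (1 / ((n : ℝ) - 1))) ^ (n - 1)
    ∧ IsRealEigenvalue (skeletonWalk μ) 1
    ∧ (X + C (1 / ((n : ℝ) - 1))) ^ (n - 1) ∣ (skeletonWalk μ).charpoly := by
  have hchar := charpoly_skeletonWalk_mul_X_pow hn hsum hne
  have hc : 1 / ((n : ℝ) - 1) ≠ 0 := one_div_ne_zero (sub_pos.2 (Nat.one_lt_cast.2 hn)).ne'
  have hdvd : (X + C (1 / ((n : ℝ) - 1))) ^ (n - 1) ∣ (skeletonWalk μ).charpoly * X ^ n :=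
    hchar ▸ dvd_mul_left _ _
  exact ⟨hchar, isRealEigenvalue_skeletonWalk_one hn hsum hne,
    (isCoprime_X_add_C_X hc.isUnit).pow.dvd_of_dvd_mul_right hdvd⟩

/-- `charpoly(P_∅) · X^n = charpoly(M_∅) · (X-1) · (X+1/(n-1))^(n-1)`;
in particular `P_∅` has `1` as an eigenvalue and `-1/(n-1)` as an eigenvalue of
algebraic multiplicity at least `n-1`. -/
theorem statement7 (n : ℕ) (hn : 2 ≤ n) (μ : Finset (Fin n) → ℝ)
    (hpos : ∀ S, 0 ≤ μ S) (hsum : ∑ S : Finset (Fin n), μ S = 1)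
    (hmarg : ∀ i : Fin n, 0 < prE μ (fun S => i ∈ S)
      ∧ prE μ (fun S => i ∈ S) < 1) :
    (skeletonWalk μ).charpoly * X ^ n
      = (centeredWalk μ).charpoly * (X - 1) * (X + C (1 / ((n : ℝ) - 1))) ^ (n - 1)
    ∧ IsRealEigenvalue (skeletonWalk μ) 1
    ∧ (X + C (1 / ((n : ℝ) - 1))) ^ (n - 1) ∣ (skeletonWalk μ).charpoly :=
  statement7_general n hn μ hsum fun i s => (prE_stateEvent_pos hsum (hmarg i) s).ne'

end PaperStmt
end
end
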